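/- Let T > 0, let ε ∈ (0,1/2), and let {t_m}_{m≥1} ⊂ (0,T) be pairwise distinct with t_m → T1 for some T1 ∈ (0,T). For j = 1,2 let b_j ∈ C¹([0,1]) and let g_j ∈ C¹([0,1]) with g_j(0) = g_j(1) = 0 be not identically zero. Assume supp g_1 ∪ supp g_2 ⊂ [0,ε] and supp(b_1 − b_2) ⊂ [0, 1/2 − ε]. If the boundary measurements satisfy M_1(t_m) = M_2(t_m) for all m ∈ ℕ, then g_1 = g_2 and b_1 = b_2. -/

import Mathlib

open Set

/-- `(μ, ψ)` is a Dirichlet eigenpair of `-d²/dx² + V` on `(0,1)`. -/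
def IsDirichletEigenpair (V : ℝ → ℝ) (μ : ℝ) (ψ : ℝ → ℝ) : Prop :=
  ContDiffOn ℝ 2 ψ (Icc 0 1) ∧ (∃ x ∈ Icc (0:ℝ) 1, ψ x ≠ 0) ∧
  (∀ x ∈ Ioo (0:ℝ) 1,
    -(derivWithin (derivWithin ψ (Icc 0 1)) (Icc 0 1) x) + V x * ψ x = μ * ψ x) ∧
  ψ 0 = 0 ∧ ψ 1 = 0

/-- `(lam, phi)` enumerates the Dirichlet eigenvalues of `-d²/dx² + V` on `(0,1)` in
strictly increasing order, with `L²`-normalized eigenfunctions. -/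
def IsDirichletSystem (V : ℝ → ℝ) (lam : ℕ → ℝ) (phi : ℕ → ℝ → ℝ) : Prop :=
  StrictMono lam ∧ Filter.Tendsto lam Filter.atTop Filter.atTop ∧
  (∀ k, IsDirichletEigenpair V (lam k) (phi k)) ∧
  (∀ k, ∫ x in (0:ℝ)..1, (phi k x)^2 = 1) ∧
  (∀ μ ψ, IsDirichletEigenpair V μ ψ → ∃ k, μ = lam k)

/-- The Schrödinger potential obtained from the convection coefficient `b`. -/
noncomputable def potentialOf (b : ℝ → ℝ) : ℝ → ℝ :=
  fun x => -(derivWithin b (Icc 0 1) x) / 2 + (b x)^2 / 4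

/-- The gauged initial datum `h(x) = e^{-(1/2)∫₁ˣ b} g(x)`. -/
noncomputable def gaugedDatum (b g : ℝ → ℝ) : ℝ → ℝ :=
  fun x => Real.exp (-(1/2) * ∫ s in (1:ℝ)..x, b s) * g x

/-- The lateral boundary measurement `M(t) = ∂ₓu(t,1)` of the convection–diffusion
problem, written via the eigenfunction expansion. -/
noncomputable def boundaryMeasurement (b g : ℝ → ℝ) (lam : ℕ → ℝ) (phi : ℕ → ℝ → ℝ)
    (t : ℝ) : ℝ :=
  ∑' k, (∫ x in (0:ℝ)..1, gaugedDatum b g x * phi k x) * Real.exp (-(lam k) * t)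
    * derivWithin (phi k) (Icc 0 1) 1

open Filter Topology MeasureTheory

open Set

/-- Solutions of the Schrodinger equation on the unit interval. -/
structure IsSol (V : ℝ → ℝ) (l : ℂ) (y y' : ℝ → ℂ) : Prop where
  d1 : ∀ x ∈ Icc (0:ℝ) 1, HasDerivWithinAt y (y' x) (Icc 0 1) x
  d2 : ∀ x ∈ Icc (0:ℝ) 1, HasDerivWithinAt y' (((V x : ℂ) - l) * y x) (Icc 0 1) x

namespace IsSol

variable {V : ℝ → ℝ} {l m : ℂ} {y y' v v' : ℝ → ℂ}

theorem cont (h : IsSol V l y y') : ContinuousOn y (Icc 0 1) :=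
  fun x hx => (h.d1 x hx).continuousWithinAt

theorem cont' (h : IsSol V l y y') : ContinuousOn y' (Icc 0 1) :=
  fun x hx => (h.d2 x hx).continuousWithinAt

theorem hd1 (h : IsSol V l y y') {x : ℝ} (hx : x ∈ Ioo (0:ℝ) 1) : HasDerivAt y (y' x) x :=
  (h.d1 x (Ioo_subset_Icc_self hx)).hasDerivAt (Icc_mem_nhds hx.1 hx.2)

theorem hd2 (h : IsSol V l y y') {x : ℝ} (hx : x ∈ Ioo (0:ℝ) 1) :
    HasDerivAt y' (((V x : ℂ) - l) * y x) x :=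
  (h.d2 x (Ioo_subset_Icc_self hx)).hasDerivAt (Icc_mem_nhds hx.1 hx.2)

theorem lin (h : IsSol V l y y') (h2 : IsSol V l v v') (a b : ℂ) :
    IsSol V l (fun x => a * y x + b * v x) (fun x => a * y' x + b * v' x) where
  d1 := fun x hx => ((h.d1 x hx).const_mul a).add ((h2.d1 x hx).const_mul b)
  d2 := fun x hx => by
    have := ((h.d2 x hx).const_mul a).add ((h2.d2 x hx).const_mul b)
    refine this.congr_deriv ?_
    ring

theorem conj (h : IsSol V l y y') :
    IsSol V ((starRingEnd ℂ) l) (fun x => (starRingEnd ℂ) (y x))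
      (fun x => (starRingEnd ℂ) (y' x)) where
  d1 := fun x hx => (h.d1 x hx).star
  d2 := fun x hx => by
    refine (h.d2 x hx).star.congr_deriv ?_
    simp

/-- Wronskian (Lagrange) identity. -/
theorem wronsk (h : IsSol V l y y') (h2 : IsSol V m v v') {a b : ℝ} (ha : a ∈ Icc (0:ℝ) 1)
    (hb : b ∈ Icc (0:ℝ) 1) (hab : a ≤ b) :
    (y b * v' b - y' b * v b) - (y a * v' a - y' a * v a)
      = (l - m) * ∫ x in a..b, y x * v x := by
  have hs : Icc a b ⊆ Icc (0:ℝ) 1 := Icc_subset_Icc ha.1 hb.2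
  have hs' : Ioo a b ⊆ Ioo (0:ℝ) 1 := Ioo_subset_Ioo ha.1 hb.2
  rw [← intervalIntegral.integral_const_mul]
  symm
  have hc : ContinuousOn (fun x => (l - m) * (y x * v x)) (Icc a b) :=
    (continuousOn_const.mul (h.cont.mul h2.cont)).mono hs
  refine intervalIntegral.integral_eq_sub_of_hasDerivAt_of_le (f := fun x => y x * v' x - y' x * v x)
    hab ?_ ?_ ?_
  · exact ((h.cont.mul h2.cont').sub (h.cont'.mul h2.cont)).mono hs
  · intro x hx
    have hx := hs' hx
    have := ((h.hd1 hx).mul (h2.hd2 hx)).sub ((h.hd2 hx).mul (h2.hd1 hx))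
    refine this.congr_deriv ?_
    ring
  · exact hc.intervalIntegrable_of_Icc hab

theorem wronsk_const (h : IsSol V l y y') (h2 : IsSol V l v v') {a b : ℝ} (ha : a ∈ Icc (0:ℝ) 1)
    (hb : b ∈ Icc (0:ℝ) 1) :
    y b * v' b - y' b * v b = y a * v' a - y' a * v a := by
  rcases le_total a b with hab | hab
  · have := h.wronsk h2 ha hb hab
    simp only [sub_self, zero_mul] at this
    linear_combination this
  · have := h.wronsk h2 hb ha hab
    simp only [sub_self, zero_mul] at this
    linear_combination -this

/-- weighted energy -/
noncomputable def en (w : ℝ) (y y' : ℝ → ℂ) (x : ℝ) : ℝ := ‖y' x‖ ^ 2 + w ^ 2 * ‖y x‖ ^ 2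

theorem en_deriv (h : IsSol V l y y') {M w : ℝ} (hw : 0 < w)
    (hM : ∀ x ∈ Icc (0:ℝ) 1, |V x| ≤ M) {x : ℝ} (hx : x ∈ Ioo (0:ℝ) 1) :
    ∃ e, HasDerivAt (en w y y') e x ∧
      |e| ≤ (‖((w:ℂ) ^ 2 - l)‖ + M) / w * en w y y' x := by
  have h1 := (h.hd1 hx).norm_sq
  have h2 := (h.hd2 hx).norm_sq
  refine ⟨_, h2.add (h1.const_mul (w ^ 2)), ?_⟩
  have e1 : 2 * inner ℝ (y' x) (((V x : ℂ) - l) * y x) + w ^ 2 * (2 * inner ℝ (y x) (y' x))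
      = 2 * inner ℝ (y' x) (((V x : ℂ) + ((w:ℂ) ^ 2 - l)) * y x) := by
    have : ((V x : ℂ) + ((w:ℂ) ^ 2 - l)) * y x = ((V x : ℂ) - l) * y x + (w ^ 2 : ℝ) • y x := by
      rw [Complex.real_smul]; push_cast; ring
    rw [this, inner_add_right, inner_smul_right, real_inner_comm (y' x) (y x)]
    ring
  rw [e1]
  have e2 := abs_real_inner_le_norm (y' x) (((V x : ℂ) + ((w:ℂ) ^ 2 - l)) * y x)
  rw [norm_mul] at e2
  have e3 : ‖(V x : ℂ) + ((w:ℂ) ^ 2 - l)‖ ≤ ‖((w:ℂ) ^ 2 - l)‖ + M := by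
    refine (norm_add_le _ _).trans ?_
    have := hM x (Ioo_subset_Icc_self hx)
    rw [Complex.norm_real, Real.norm_eq_abs]; linarith
  set B := ‖((w:ℂ) ^ 2 - l)‖ + M
  rw [abs_mul, abs_two]
  have hB : 0 ≤ B := (norm_nonneg _).trans e3
  calc 2 * |inner ℝ (y' x) (((V x : ℂ) + ((w:ℂ) ^ 2 - l)) * y x)|
      ≤ 2 * (‖y' x‖ * (B * ‖y x‖)) := by
        have : ‖y' x‖ * (‖(V x : ℂ) + ((w:ℂ) ^ 2 - l)‖ * ‖y x‖) ≤ ‖y' x‖ * (B * ‖y x‖) := by gcongr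
        linarith
    _ = B / w * (2 * ‖y' x‖ * (w * ‖y x‖)) := by field_simp
    _ ≤ B / w * en w y y' x := by
        gcongr
        unfold en
        nlinarith [sq_nonneg (‖y' x‖ - w * ‖y x‖)]

theorem en_cont (h : IsSol V l y y') (w : ℝ) : ContinuousOn (en w y y') (Icc 0 1) :=
  (h.cont'.norm.pow 2).add (continuousOn_const.mul (h.cont.norm.pow 2))

theorem en_le (h : IsSol V l y y') {M w : ℝ} (hw : 0 < w)
    (hM : ∀ x ∈ Icc (0:ℝ) 1, |V x| ≤ M) {a b : ℝ} (ha : a ∈ Icc (0:ℝ) 1) (hb : b ∈ Icc (0:ℝ) 1) :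
    en w y y' b ≤ en w y y' a * Real.exp ((‖((w:ℂ) ^ 2 - l)‖ + M) / w * |b - a|) := by
  set ρ := (‖((w:ℂ) ^ 2 - l)‖ + M) / w with hρ
  have key : ∀ s : ℝ, ∀ x ∈ Ioo (0:ℝ) 1, ∃ e, |e| ≤ ρ * en w y y' x ∧
      HasDerivAt (fun x => en w y y' x * Real.exp (s * x))
       (e * Real.exp (s * x) + en w y y' x * (Real.exp (s * x) * (s * 1))) x := by
    intro s x hx
    obtain ⟨e, he, hb⟩ := h.en_deriv hw hM hx
    exact ⟨e, hb, he.mul (((hasDerivAt_id x).const_mul s).exp)⟩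
  have hcont : ∀ s : ℝ, ContinuousOn (fun x => en w y y' x * Real.exp (s * x)) (Icc 0 1) := by
    intro s
    exact (h.en_cont w).mul (by fun_prop)
  rcases le_total a b with hab | hab
  · have hanti : AntitoneOn (fun x => en w y y' x * Real.exp (-ρ * x)) (Icc 0 1) := by
      refine antitoneOn_of_deriv_nonpos (convex_Icc 0 1) (hcont _) ?_ ?_
      · intro x hx
        rw [interior_Icc] at hx
        obtain ⟨e, -, he⟩ := key (-ρ) x hx
        exact he.differentiableAt.differentiableWithinAt
      · intro x hx
        rw [interior_Icc] at hx
        obtain ⟨e, h1, he⟩ := key (-ρ) x hx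
        rw [he.deriv]
        have := Real.exp_pos (-ρ * x)
        have h2 := (abs_le.1 h1).2
        nlinarith
    have := hanti ha hb hab
    simp only at this
    rw [abs_of_nonneg (by linarith)]
    have e : Real.exp (ρ * (b - a)) = Real.exp (-ρ * a) * (Real.exp (-ρ * b))⁻¹ := by
      rw [← Real.exp_neg, ← Real.exp_add]; congr 1; ring
    rw [e, ← mul_assoc, ← div_eq_mul_inv, le_div_iff₀ (Real.exp_pos _)]
    exact this
  · have hmono : MonotoneOn (fun x => en w y y' x * Real.exp (ρ * x)) (Icc 0 1) := by
      refine monotoneOn_of_deriv_nonneg (convex_Icc 0 1) (hcont _) ?_ ?_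
      · intro x hx
        rw [interior_Icc] at hx
        obtain ⟨e, -, he⟩ := key ρ x hx
        exact he.differentiableAt.differentiableWithinAt
      · intro x hx
        rw [interior_Icc] at hx
        obtain ⟨e, h1, he⟩ := key ρ x hx
        rw [he.deriv]
        have := Real.exp_pos (ρ * x)
        have h2 := (abs_le.1 h1).1
        nlinarith
    have := hmono hb ha hab
    simp only at this
    rw [abs_of_nonpos (by linarith)]
    have e : Real.exp (ρ * (-(b - a))) = Real.exp (ρ * a) * (Real.exp (ρ * b))⁻¹ := by
      rw [← Real.exp_neg, ← Real.exp_add]; congr 1; ring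
    rw [e, ← mul_assoc, ← div_eq_mul_inv, le_div_iff₀ (Real.exp_pos _)]
    exact this

theorem exists_bound {V : ℝ → ℝ} (hV : ContinuousOn V (Icc 0 1)) :
    ∃ M, 0 ≤ M ∧ ∀ x ∈ Icc (0:ℝ) 1, |V x| ≤ M := by
  obtain ⟨M, hM⟩ := isCompact_Icc.exists_bound_of_continuousOn hV
  exact ⟨max M 0, le_max_right _ _, fun x hx => (hM x hx).trans (le_max_left _ _)⟩

theorem eq_zero (h : IsSol V l y y') (hV : ContinuousOn V (Icc 0 1)) {a : ℝ}
    (ha : a ∈ Icc (0:ℝ) 1) (h0 : y a = 0) (h1 : y' a = 0) {x : ℝ} (hx : x ∈ Icc (0:ℝ) 1) :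
    y x = 0 ∧ y' x = 0 := by
  obtain ⟨M, -, hM⟩ := exists_bound hV
  have := h.en_le one_pos hM ha hx
  simp only [en, h0, h1, norm_zero] at this
  have h2 := sq_nonneg ‖y x‖
  have h3 := sq_nonneg ‖y' x‖
  constructor
  · have : ‖y x‖ ^ 2 = 0 := by nlinarith
    simpa using this
  · have : ‖y' x‖ ^ 2 = 0 := by nlinarith
    simpa using this

theorem unique (h : IsSol V l y y') (h2 : IsSol V l v v') (hV : ContinuousOn V (Icc 0 1)) {a : ℝ}
    (ha : a ∈ Icc (0:ℝ) 1) (h0 : y a = v a) (h1 : y' a = v' a) {x : ℝ} (hx : x ∈ Icc (0:ℝ) 1) :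
    y x = v x ∧ y' x = v' x := by
  have := (h.lin h2 1 (-1)).eq_zero hV ha (by simp [h0]) (by simp [h1]) hx
  constructor
  · linear_combination this.1
  · linear_combination this.2

/-- sharp upper bound for the sine-type solution. -/
theorem sine_bound (hV : ContinuousOn V (Icc 0 1)) : ∃ K, 0 < K ∧ ∀ (z : ℂ) (y y' : ℝ → ℂ) (a : ℝ),
    1 ≤ ‖z‖ → IsSol V (z ^ 2) y y' → a ∈ Icc (0:ℝ) 1 → y a = 0 → y' a = 1 →
    ∀ x ∈ Icc (0:ℝ) 1, ‖y x‖ ≤ K * Real.exp (|z.im| * |x - a|) / ‖z‖ := by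
  obtain ⟨M, hM0, hM⟩ := exists_bound hV
  refine ⟨Real.exp M, Real.exp_pos _, ?_⟩
  intro z y y' a hz h ha h0 h1 x hx
  have hw : 0 < ‖z‖ := by linarith
  have := h.en_le hw hM ha hx
  simp only [en, h0, h1, norm_zero, norm_one] at this
  have e1 : ‖((‖z‖:ℂ) ^ 2 - z ^ 2)‖ = 2 * |z.im| * ‖z‖ := by
    have : ((‖z‖:ℂ) ^ 2 - z ^ 2) = ((starRingEnd ℂ) z - z) * z := by
      rw [← Complex.conj_mul']; ring
    rw [this, norm_mul]
    congr 1
    have : (starRingEnd ℂ) z - z = ((-2 * z.im : ℝ) : ℂ) * Complex.I := by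
      apply Complex.ext <;> simp; ring
    rw [this, norm_mul, Complex.norm_real, Complex.norm_I]
    simp
  rw [e1] at this
  have e2 : (2 * |z.im| * ‖z‖ + M) / ‖z‖ * |x - a| ≤ 2 * (M + |z.im| * |x - a|) := by
    have hxa : |x - a| ≤ 1 := by rw [abs_le]; constructor <;> linarith [hx.1, hx.2, ha.1, ha.2]
    have : (2 * |z.im| * ‖z‖ + M) / ‖z‖ = 2 * |z.im| + M / ‖z‖ := by field_simp
    rw [this]
    have h3 : M / ‖z‖ ≤ M := div_le_self hM0 hz
    have h4 : M / ‖z‖ * |x - a| ≤ M * 1 := by gcongr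
    nlinarith
  have e3 : ‖z‖ ^ 2 * ‖y x‖ ^ 2 ≤ (Real.exp M * Real.exp (|z.im| * |x - a|)) ^ 2 := by
    calc ‖z‖ ^ 2 * ‖y x‖ ^ 2 ≤ Real.exp ((2 * |z.im| * ‖z‖ + M) / ‖z‖ * |x - a|) := by
          have h5 := sq_nonneg ‖y' x‖
          linarith
      _ ≤ Real.exp (2 * (M + |z.im| * |x - a|)) := Real.exp_le_exp.2 e2
      _ = _ := by rw [← Real.exp_add, ← Real.exp_nat_mul]; norm_num
  rw [← mul_pow] at e3
  have e4 := le_of_sq_le_sq e3 (by positivity)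
  rw [le_div_iff₀ hw]
  linarith

theorem norm_sin_le (z : ℂ) : ‖Complex.sin z‖ ≤ Real.exp |z.im| := by
  have : Complex.sin z = (Complex.exp (-z * Complex.I) - Complex.exp (z * Complex.I)) * Complex.I / 2 := rfl
  rw [this, norm_div, norm_mul, Complex.norm_I, mul_one]
  have h1 := norm_sub_le (Complex.exp (-z * Complex.I)) (Complex.exp (z * Complex.I))
  simp only [Complex.norm_exp] at h1
  simp at h1
  have h2 : Real.exp z.im ≤ Real.exp |z.im| := Real.exp_le_exp.2 (le_abs_self _)
  have h3 : Real.exp (-z.im) ≤ Real.exp |z.im| := Real.exp_le_exp.2 (neg_le_abs _)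
  rw [div_le_iff₀ (by simp)]
  simp
  linarith

/-- asymptotics of the sine-type solution. -/
theorem sine_asymp (hV : ContinuousOn V (Icc 0 1)) : ∃ K, 0 < K ∧ ∀ (z : ℂ) (y y' : ℝ → ℂ) (a : ℝ),
    1 ≤ ‖z‖ → IsSol V (z ^ 2) y y' → a ∈ Icc (0:ℝ) 1 → y a = 0 → y' a = 1 →
    ∀ x ∈ Icc a 1, ‖y x - Complex.sin (z * (x - a : ℝ)) / z‖
      ≤ K * Real.exp (|z.im| * (x - a)) / ‖z‖ ^ 2 := by
  obtain ⟨M, hM0, hM⟩ := exists_bound hV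
  obtain ⟨K, hK0, hK⟩ := sine_bound hV
  refine ⟨M * K + 1, by positivity, ?_⟩
  intro z y y' a hz h ha h0 h1 x hx
  have hx1 : x ∈ Icc (0:ℝ) 1 := ⟨ha.1.trans hx.1, hx.2⟩
  have hz0 : z ≠ 0 := by rintro rfl; simp at hz; linarith
  have hzp : 0 < ‖z‖ := by linarith
  set A : ℝ → ℂ := fun t => y t * Complex.cos (z * (x - t : ℝ)) + y' t * (Complex.sin (z * (x - t:ℝ)) / z)
    with hA
  have hsub : Icc a x ⊆ Icc (0:ℝ) 1 := Icc_subset_Icc ha.1 hx.2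
  have hd : ∀ t ∈ Icc a x, HasDerivWithinAt A ((V t : ℂ) * y t * (Complex.sin (z * (x - t:ℝ)) / z)) (Icc a x) t := by
    intro t ht
    have i1 : HasDerivAt (fun t : ℝ => z * ((x - t : ℝ) : ℂ)) (z * ((-1 : ℝ) : ℂ)) t := by
      have : HasDerivAt (fun t : ℝ => x - t) (-1) t := by simpa using (hasDerivAt_id t).const_sub x
      exact this.ofReal_comp.const_mul z
    have i2 := ((Complex.hasDerivAt_cos _).comp t i1).hasDerivWithinAt (s := Icc a x)
    have i3 := (((Complex.hasDerivAt_sin _).comp t i1).div_const z).hasDerivWithinAt (s := Icc a x)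
    have := (((h.d1 t (hsub ht)).mono hsub).mul i2).add (((h.d2 t (hsub ht)).mono hsub).mul i3)
    refine this.congr_deriv ?_
    simp only [Function.comp]
    push_cast
    field_simp
    ring
  have hb := (convex_Icc a x).norm_image_sub_le_of_norm_hasDerivWithin_le
    (C := M * K * Real.exp (|z.im| * (x - a)) / ‖z‖ ^ 2) hd ?_ (left_mem_Icc.2 hx.1) (right_mem_Icc.2 hx.1)
  · have e1 : A x = y x := by simp [hA]
    have e2 : A a = Complex.sin (z * (x - a : ℝ)) / z := by simp [hA, h0, h1]
    rw [e1, e2] at hb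
    refine hb.trans ?_
    have : ‖x - a‖ ≤ 1 := by
      rw [Real.norm_eq_abs, abs_le]; constructor <;> linarith [hx.1, hx.2, ha.1, ha.2]
    calc _ ≤ M * K * Real.exp (|z.im| * (x - a)) / ‖z‖ ^ 2 * 1 := by gcongr
      _ ≤ _ := by rw [mul_one]; gcongr; linarith
  · intro t ht
    rw [norm_mul, norm_mul, norm_div, Complex.norm_real]
    have b1 := hM t (hsub ht)
    have b2 := hK z y y' a hz h ha h0 h1 t (hsub ht)
    have b3 := norm_sin_le (z * (x - t : ℝ))
    have b4 : |(z * (x - t : ℝ)).im| = |z.im| * (x - t) := by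
      rw [Complex.im_mul_ofReal, abs_mul, abs_of_nonneg (show 0 ≤ x - t by linarith [ht.2])]
    rw [b4] at b3
    rw [abs_of_nonneg (show 0 ≤ t - a by linarith [ht.1])] at b2
    calc ‖V t‖ * ‖y t‖ * (‖Complex.sin (z * (x - t : ℝ))‖ / ‖z‖)
        ≤ M * (K * Real.exp (|z.im| * (t - a)) / ‖z‖) * (Real.exp (|z.im| * (x - t)) / ‖z‖) := by
          gcongr
          exact b1
      _ = M * K * (Real.exp (|z.im| * (t - a)) * Real.exp (|z.im| * (x - t))) / ‖z‖ ^ 2 := by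
          field_simp
      _ = _ := by rw [← Real.exp_add]; congr 3; ring

end IsSol

open Set Filter Topology

/-- boundary of the square of half-side `r` -/
def OnSq (r : ℝ) (z : ℂ) : Prop := (|z.re| = r ∧ |z.im| ≤ r) ∨ (|z.im| = r ∧ |z.re| ≤ r)

theorem OnSq.le_norm {r : ℝ} {z : ℂ} (h : OnSq r z) : r ≤ ‖z‖ := by
  rcases h with ⟨h, -⟩ | ⟨h, -⟩
  · rw [← h]; exact Complex.abs_re_le_norm z
  · rw [← h]; exact Complex.abs_im_le_norm z

theorem square_liouville (f : ℂ → ℂ) (hf : Differentiable ℂ f) (r : ℕ → ℝ)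
    (hr : Tendsto r atTop atTop) (C : ℝ)
    (hC : ∀ᶠ n in atTop, ∀ z, OnSq (r n) z → ‖f (z ^ 2)‖ ≤ C)
    (hlim : Tendsto (fun n => f (((r n : ℂ) * Complex.I) ^ 2)) atTop (𝓝 0)) : ∀ l, f l = 0 := by
  have hdiff : Differentiable ℂ (fun z => f (z ^ 2)) := hf.comp (differentiable_id.pow 2)
  have hbd : ∀ z, ‖f (z ^ 2)‖ ≤ C := by
    intro z
    obtain ⟨n, hn1, hn2⟩ := (hC.and (hr.eventually_gt_atTop ‖z‖)).exists
    have hz0 : 0 < r n := (norm_nonneg z).trans_lt hn2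
    have hlt : -(r n) < r n := by linarith
    refine Complex.norm_le_of_forall_mem_frontier_norm_le
      (U := Ioo (-(r n)) (r n) ×ℂ Ioo (-(r n)) (r n)) ?_ hdiff.diffContOnCl ?_ ?_
    · exact (Metric.isBounded_Ioo _ _).reProdIm (Metric.isBounded_Ioo _ _)
    · intro w hw
      rw [Complex.frontier_reProdIm] at hw
      simp only [closure_Ioo hlt.ne, frontier_Ioo hlt] at hw
      apply hn1
      rcases hw with ⟨h1, h2⟩ | ⟨h1, h2⟩
      · right
        simp only [mem_preimage, mem_Icc, mem_insert_iff, mem_singleton_iff] at h1 h2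
        refine ⟨?_, abs_le.2 h1⟩
        rcases h2 with h2 | h2 <;> rw [h2] <;> simp [abs_of_pos hz0]
      · left
        simp only [mem_preimage, mem_Icc, mem_insert_iff, mem_singleton_iff] at h1 h2
        refine ⟨?_, abs_le.2 h2⟩
        rcases h1 with h2 | h2 <;> rw [h2] <;> simp [abs_of_pos hz0]
    · apply subset_closure
      have h1 := (Complex.abs_re_le_norm z).trans_lt hn2
      have h2 := (Complex.abs_im_le_norm z).trans_lt hn2
      exact ⟨abs_lt.1 h1, abs_lt.1 h2⟩
  have hconst : ∀ z, f (z ^ 2) = f (0 ^ 2) := by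
    intro z
    refine hdiff.apply_eq_apply_of_bounded ?_ z 0
    rw [isBounded_iff_forall_norm_le]
    exact ⟨C, by rintro _ ⟨z, rfl⟩; exact hbd z⟩
  have h0 : f (0 ^ 2) = 0 := by
    refine tendsto_nhds_unique ?_ hlim
    simp only [hconst]
    exact tendsto_const_nhds
  intro l
  obtain ⟨z, hz⟩ := IsAlgClosed.exists_pow_nat_eq l (n := 2) (by norm_num)
  rw [← hz, hconst, h0]

theorem sin_lower {L : ℝ} (hL : 0 < L) (n : ℕ) (z : ℂ) (hz : OnSq ((n + 1 / 2) * Real.pi / L) z) :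
    Real.exp (|z.im| * L) / 4 ≤ ‖Complex.sin (z * (L : ℝ))‖ := by
  set x := z.re * L with hx
  set y := z.im * L with hy
  have hzz : z * (L : ℝ) = (x : ℂ) + (y : ℂ) * Complex.I := by
    apply Complex.ext <;> simp [hx, hy]
  have hyabs : |z.im| * L = |y| := by rw [hy, abs_mul, abs_of_pos hL]
  have hsin : ‖Complex.sin (z * (L : ℝ))‖ ^ 2 = Real.sin x ^ 2 + Real.sinh y ^ 2 := by
    rw [hzz, Complex.sin_add_mul_I, ← Complex.ofReal_sin, ← Complex.ofReal_cos,
      ← Complex.ofReal_sinh, ← Complex.ofReal_cosh, ← Complex.normSq_eq_norm_sq]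
    have : ((Real.sin x : ℂ) * (Real.cosh y) + (Real.cos x) * (Real.sinh y) * Complex.I)
       = ((Real.sin x * Real.cosh y : ℝ) : ℂ) + ((Real.cos x * Real.sinh y : ℝ) : ℂ) * Complex.I := by
      push_cast; ring
    rw [this, Complex.normSq_add_mul_I]
    have h1 := Real.cosh_sq y
    have h2 := Real.sin_sq_add_cos_sq x
    rw [mul_pow, mul_pow, h1]
    linear_combination (Real.sinh y ^ 2) * h2
  rw [hyabs]
  refine le_of_sq_le_sq ?_ (norm_nonneg _)
  rw [hsin]
  have hcosh : Real.exp |y| / 2 ≤ Real.cosh y := by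
    rw [← Real.cosh_abs, Real.cosh_eq]
    have := Real.exp_pos (-|y|); linarith
  have hcs := Real.cosh_sq y
  have hep := Real.exp_pos |y|
  rcases hz with ⟨h, -⟩ | ⟨h, -⟩
  · have hxa : |x| = n * Real.pi + Real.pi / 2 := by
      rw [hx, abs_mul, abs_of_pos hL, h]; field_simp
    have hs : Real.sin x ^ 2 = 1 := by
      have : Real.sin x ^ 2 = Real.sin |x| ^ 2 := by
        rcases abs_choice x with h | h <;> rw [h]; simp
      rw [this, hxa, Real.sin_add_pi_div_two]
      have := Real.sin_sq_add_cos_sq (n * Real.pi)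
      rw [Real.sin_nat_mul_pi] at this
      linarith
    rw [hs]
    nlinarith
  · have hya : |y| = (n + 1 / 2) * Real.pi := by
      rw [← hyabs, h]; field_simp
    have h1 : 3 / 2 ≤ |y| := by
      rw [hya]
      have := Real.pi_gt_three
      have : (0:ℝ) ≤ n := Nat.cast_nonneg n
      nlinarith
    have h2 : 5 / 2 ≤ Real.exp |y| := by
      have := Real.add_one_le_exp |y|; linarith
    have h3 : 0 ≤ Real.sin x ^ 2 := sq_nonneg _
    nlinarith

/-- division of entire functions with simple zeros of the denominator -/
theorem entire_div (A B B' : ℂ → ℂ) (hA : Differentiable ℂ A) (hB : ∀ z, HasDerivAt B (B' z) z)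
    (hs : ∀ z, B z = 0 → B' z ≠ 0) (hz : ∀ z, B z = 0 → A z = 0) :
    ∃ E : ℂ → ℂ, Differentiable ℂ E ∧ (∀ z, A z = E z * B z) ∧
      ∀ z, B z = 0 → E z = deriv A z / B' z := by
  classical
  have hBd : Differentiable ℂ B := fun z => (hB z).differentiableAt
  refine ⟨fun z => if B z = 0 then deriv A z / B' z else A z / B z, ?_, ?_, ?_⟩
  · intro z0
    by_cases h0 : B z0 = 0
    · have hdA : Differentiable ℂ (dslope A z0) := by
        have := (Complex.differentiableOn_dslope (f := A) (c := z0) (s := univ) univ_mem).2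
          hA.differentiableOn
        exact differentiableOn_univ.1 this
      have hdB : Differentiable ℂ (dslope B z0) := by
        have := (Complex.differentiableOn_dslope (f := B) (c := z0) (s := univ) univ_mem).2
          hBd.differentiableOn
        exact differentiableOn_univ.1 this
      have hne : dslope B z0 z0 ≠ 0 := by
        rw [dslope_same, (hB z0).deriv]; exact hs z0 h0
      have hq : DifferentiableAt ℂ (fun z => dslope A z0 z / dslope B z0 z) z0 :=
        (hdA z0).div (hdB z0) hne
      refine hq.congr_of_eventuallyEq ?_
      filter_upwards [(hdB z0).continuousAt.eventually_ne hne] with z hzne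
      by_cases hzz : z = z0
      · subst hzz
        simp only [h0, if_true, dslope_same, (hB z).deriv]
      · have eA := sub_smul_dslope A z0 z
        have eB := sub_smul_dslope B z0 z
        rw [h0, sub_zero, smul_eq_mul] at eB
        rw [hz z0 h0, sub_zero, smul_eq_mul] at eA
        have hd : z - z0 ≠ 0 := sub_ne_zero.2 hzz
        have : B z ≠ 0 := by rw [← eB]; exact mul_ne_zero hd hzne
        simp only [this, if_false]
        rw [← eA, ← eB, mul_div_mul_left _ _ hd]
    · have hq : DifferentiableAt ℂ (fun z => A z / B z) z0 := (hA z0).div (hBd z0) h0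
      refine hq.congr_of_eventuallyEq ?_
      filter_upwards [(hBd z0).continuousAt.eventually_ne h0] with z hzne
      simp [hzne]
  · intro z
    by_cases h0 : B z = 0
    · simp [h0, hz z h0]
    · simp [h0]
  · intro z h0
    simp [h0]

theorem entire_mul_zero (A B : ℂ → ℂ) (hA : Differentiable ℂ A) (hB : Differentiable ℂ B)
    (h : ∀ z, A z * B z = 0) {z0 : ℂ} (h0 : A z0 ≠ 0) : ∀ z, B z = 0 := by
  have hBa : AnalyticOnNhd ℂ B univ := fun z _ => hB.analyticAt z
  have := hBa.eqOn_zero_of_preconnected_of_eventuallyEq_zero isPreconnected_univ (mem_univ z0) ?_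
  · intro z; exact this (mem_univ z)
  · filter_upwards [(hA z0).continuousAt.eventually_ne h0] with z hz
    exact (mul_eq_zero.1 (h z)).resolve_left hz

namespace Fundam

theorem h01 : (0:ℝ) ≤ 1 := zero_le_one

abbrev X := C(Icc (0:ℝ) 1, ℂ)

noncomputable def ext (f : X) : ℝ → ℂ := IccExtend h01 f

theorem ext_cont (f : X) : Continuous (ext f) := f.continuous.Icc_extend'

theorem ext_apply (f : X) {x : ℝ} (hx : x ∈ Icc (0:ℝ) 1) : ext f x = f ⟨x, hx⟩ :=
  IccExtend_of_mem h01 f hx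

theorem ext_norm (f : X) (x : ℝ) : ‖ext f x‖ ≤ ‖f‖ := f.norm_coe_le_norm _

noncomputable def Jf (f : X) : X :=
  ⟨fun x => ∫ t in (0:ℝ)..x, ext f t,
    (intervalIntegral.continuous_primitive (fun a b => (ext_cont f).intervalIntegrable a b) 0).comp
      continuous_subtype_val⟩

theorem Jf_apply (f : X) (x : Icc (0:ℝ) 1) : Jf f x = ∫ t in (0:ℝ)..x, ext f t := rfl

theorem Jf_bound (f : X) (c : ℝ) (n : ℕ) (hf : ∀ x : Icc (0:ℝ) 1, ‖f x‖ ≤ c * (x:ℝ) ^ n / n.factorial)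
    (x : Icc (0:ℝ) 1) : ‖Jf f x‖ ≤ c * (x:ℝ) ^ (n + 1) / (n + 1).factorial := by
  rw [Jf_apply]
  have h1 : ‖∫ t in (0:ℝ)..x, ext f t‖ ≤ ∫ t in (0:ℝ)..x, c * t ^ n / n.factorial := by
    refine intervalIntegral.norm_integral_le_of_norm_le x.2.1 ?_ ?_
    · refine Eventually.of_forall ?_
      intro t ht
      have ht' : t ∈ Icc (0:ℝ) 1 := ⟨ht.1.le, ht.2.trans x.2.2⟩
      rw [ext_apply f ht']
      exact hf ⟨t, ht'⟩
    · exact (by fun_prop : Continuous fun t : ℝ => c * t ^ n / n.factorial).intervalIntegrable _ _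
  refine h1.trans (le_of_eq ?_)
  rw [intervalIntegral.integral_div, intervalIntegral.integral_const_mul, integral_pow]
  rw [Nat.factorial_succ]
  push_cast
  field_simp
  simp

noncomputable def J : X →L[ℂ] X :=
  LinearMap.mkContinuous
    { toFun := Jf
      map_add' := by
        intro f g
        ext x
        simp only [Jf_apply, ContinuousMap.add_apply]
        rw [← intervalIntegral.integral_add ((ext_cont f).intervalIntegrable _ _)
          ((ext_cont g).intervalIntegrable _ _)]
        rfl
      map_smul' := by
        intro c f
        ext x
        simp only [Jf_apply, ContinuousMap.smul_apply, RingHom.id_apply]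
        rw [← intervalIntegral.integral_smul]
        rfl } 1 (by
    intro f
    rw [one_mul]
    refine (ContinuousMap.norm_le _ (norm_nonneg _)).2 ?_
    intro x
    have := Jf_bound f ‖f‖ 0 (by intro x; simpa using f.norm_coe_le_norm x) x
    refine this.trans ?_
    simp only [zero_add, pow_one, Nat.factorial_one, Nat.cast_one, div_one]
    exact mul_le_of_le_one_right (norm_nonneg _) x.2.2)

theorem J_apply (f : X) (x : Icc (0:ℝ) 1) : J f x = ∫ t in (0:ℝ)..x, ext f t := rfl

theorem J_deriv (f : X) {x : ℝ} (hx : x ∈ Icc (0:ℝ) 1) :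
    HasDerivWithinAt (ext (J f)) (f ⟨x, hx⟩) (Icc 0 1) x := by
  have h := intervalIntegral.integral_hasDerivAt_right ((ext_cont f).intervalIntegrable 0 x)
    (ext_cont f).aestronglyMeasurable.stronglyMeasurableAtFilter (ext_cont f).continuousAt
  rw [ext_apply f hx] at h
  refine h.hasDerivWithinAt.congr ?_ ?_
  · intro y hy
    rw [ext_apply _ hy]; rfl
  · rw [ext_apply _ hx]; rfl

noncomputable def Mul (c : X) : X →L[ℂ] X := ContinuousLinearMap.mul ℂ X c

theorem Mul_apply (c f : X) (x : Icc (0:ℝ) 1) : Mul c f x = c x * f x := rfl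

theorem abs_res {E : Type*} [NormedAddCommGroup E] [NormedSpace ℂ E] [CompleteSpace E]
    (S T : E →L[ℂ] E) (hq : ∀ l : ℂ, ∃ n : ℕ, ∃ q : ℝ, 0 ≤ q ∧ q < 1 ∧
      ∀ f, ‖(fun g => S g - l • T g)^[n] f‖ ≤ q * ‖f‖) (y0 : E) :
    ∃ y : ℂ → E, Differentiable ℂ y ∧ ∀ l, y l = y0 + (S (y l) - l • T (y l)) := by
  have hunit : ∀ l : ℂ, IsUnit (1 - (S - l • T)) := by
    intro l
    obtain ⟨n, q, hq0, hq1, hq⟩ := hq l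
    have hn' : ‖(S - l • T) ^ n‖ < 1 := by
      refine lt_of_le_of_lt (ContinuousLinearMap.opNorm_le_bound _ hq0 ?_) hq1
      intro f
      have : ((S - l • T) ^ n) f = (fun g => S g - l • T g)^[n] f := by
        have h1 : (fun g => S g - l • T g) = ⇑(S - l • T) := by ext g; simp
        rw [h1]
        exact congrFun (FunLike.coe_pow_eq_iterate _ n) f
      rw [this]; exact hq f
    have h2 : IsUnit (1 - (S - l • T) ^ n) := isUnit_one_sub_of_norm_lt_one hn'
    rw [← mul_neg_geom_sum] at h2
    refine ((Commute.isUnit_mul_iff ?_).1 h2).1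
    apply Commute.sub_left (Commute.one_left _)
    exact Commute.sum_right _ _ _ (fun i _ => (Commute.refl _).pow_right i)
  refine ⟨fun l => Ring.inverse (1 - (S - l • T)) y0, ?_, ?_⟩
  · intro l
    have h1 : DifferentiableAt ℂ (fun l : ℂ => (1 - (S - l • T))) l := by fun_prop
    have h2 : DifferentiableAt ℂ (Ring.inverse : (E →L[ℂ] E) → _) (1 - (S - l • T)) :=
      differentiableAt_inverse (hunit l)
    have h3 : DifferentiableAt ℂ (fun l : ℂ => Ring.inverse (1 - (S - l • T))) l :=
      DifferentiableAt.comp (g := (Ring.inverse : (E →L[ℂ] E) → _)) l h2 h1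
    exact h3.clm_apply (differentiableAt_const y0)
  · intro l
    have := congrArg (fun T : E →L[ℂ] E => T y0) (Ring.mul_inverse_cancel _ (hunit l))
    exact sub_eq_iff_eq_add.1 this

noncomputable def Tf (c : X) (l : ℂ) : X → X := fun f => (J.comp (J.comp (Mul c))) f - l • (J.comp J) f

theorem Tf_apply (c : X) (l : ℂ) (f : X) : Tf c l f = J (J ((c - algebraMap ℂ X l) * f)) := by
  have : (c - algebraMap ℂ X l) * f = Mul c f - l • f := by
    ext x; simp [Mul_apply, sub_mul]
  rw [this, map_sub, map_sub, map_smul, map_smul]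
  rfl

theorem Tf_pow (c : X) (l : ℂ) (f : X) (n : ℕ) (x : Icc (0:ℝ) 1) :
    ‖((Tf c l)^[n] f) x‖ ≤ (‖c - algebraMap ℂ X l‖ ^ n * ‖f‖) * (x:ℝ) ^ n / n.factorial := by
  induction n generalizing x with
  | zero => simpa using f.norm_coe_le_norm x
  | succ n ih =>
    rw [Function.iterate_succ_apply', Tf_apply]
    set g := (Tf c l)^[n] f
    set d := c - algebraMap ℂ X l
    have h1 := Jf_bound (d * g) (‖d‖ ^ (n + 1) * ‖f‖) n (by
      intro x
      rw [ContinuousMap.mul_apply, norm_mul]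
      calc _ ≤ ‖d‖ * ((‖d‖ ^ n * ‖f‖) * (x:ℝ) ^ n / n.factorial) := by
            gcongr
            · exact d.norm_coe_le_norm x
            · exact ih x
        _ = _ := by ring)
    refine Jf_bound _ _ n ?_ x
    intro x
    refine (h1 x).trans ?_
    have := x.2.1
    have h3 : (x:ℝ) ^ (n + 1) ≤ (x:ℝ) ^ n := pow_le_pow_of_le_one x.2.1 x.2.2 (Nat.le_succ n)
    gcongr
    exact Nat.le_succ n

theorem exists_sol (c y0 : X) : ∃ y : ℂ → X, Differentiable ℂ y ∧
    ∀ l, y l = y0 + J (J ((c - algebraMap ℂ X l) * y l)) := by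
  obtain ⟨y, hy, hy1⟩ := abs_res (J.comp (J.comp (Mul c))) (J.comp J) (by
    intro l
    set d := c - algebraMap ℂ X l with hd
    have h1 : Tendsto (fun n : ℕ => ‖d‖ ^ n / n.factorial) atTop (𝓝 0) :=
      FloorSemiring.tendsto_pow_div_factorial_atTop _
    obtain ⟨n, hn⟩ := (h1.eventually_lt_const one_pos).exists
    refine ⟨n, _, by positivity, hn, ?_⟩
    intro f
    change ‖(Tf c l)^[n] f‖ ≤ _
    refine (ContinuousMap.norm_le _ (by positivity)).2 ?_
    intro x
    refine (Tf_pow c l f n x).trans ?_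
    rw [div_mul_eq_mul_div]
    have : (x:ℝ) ^ n ≤ 1 := pow_le_one₀ x.2.1 x.2.2
    have h4 : 0 ≤ ‖d‖ ^ n * ‖f‖ := mul_nonneg (pow_nonneg (norm_nonneg _) _) (norm_nonneg _)
    exact div_le_div_of_nonneg_right (mul_le_of_le_one_right h4 this) (by positivity)) y0
  refine ⟨y, hy, ?_⟩
  intro l
  rw [← Tf_apply]
  exact hy1 l

end Fundam

open Fundam in
theorem exists_fund (V : ℝ → ℝ) (hV : ContinuousOn V (Icc 0 1)) (α β : ℂ) :
    ∃ Y Y' : ℂ → ℝ → ℂ, (∀ l, IsSol V l (Y l) (Y' l)) ∧ (∀ l, Y l 0 = α) ∧ (∀ l, Y' l 0 = β) ∧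
      (∀ x ∈ Icc (0:ℝ) 1, Differentiable ℂ (fun l => Y l x)) ∧
      (∀ x ∈ Icc (0:ℝ) 1, Differentiable ℂ (fun l => Y' l x)) ∧
      (∀ h : ℝ → ℂ, ContinuousOn h (Icc 0 1) → ∀ x ∈ Icc (0:ℝ) 1,
        Differentiable ℂ (fun l => ∫ t in (0:ℝ)..x, h t * Y l t)) := by
  set c : X := ⟨fun x => (V x : ℂ), by
    have := continuousOn_iff_continuous_restrict.1 hV
    exact Complex.continuous_ofReal.comp this⟩ with hc
  set y0 : X := ⟨fun x => α + β * ((x:ℝ) : ℂ), by fun_prop⟩ with hy0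
  set d : ℂ → X := fun l => c - algebraMap ℂ X l with hd
  obtain ⟨Y, hYd, hYs⟩ := exists_sol c y0
  set Y1 : ℂ → X := fun l => algebraMap ℂ X β + J (d l * Y l) with hY1
  have hdd : Differentiable ℂ d := by
    have : d = fun l => c - l • (1 : X) := by
      ext l; simp [hd, Algebra.algebraMap_eq_smul_one]
    rw [this]; fun_prop
  have hY1d : Differentiable ℂ Y1 := by
    have : Differentiable ℂ (fun l => d l * Y l) := hdd.mul hYd
    exact (J.differentiable.comp this).const_add _
  have hev : ∀ (F : ℂ → X), Differentiable ℂ F → ∀ x : Icc (0:ℝ) 1, Differentiable ℂ (fun l => F l x) := by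
    intro F hF x
    exact (ContinuousMap.evalCLM ℂ x).differentiable.comp hF
  have hzero : (0:ℝ) ∈ Icc (0:ℝ) 1 := ⟨le_rfl, zero_le_one⟩
  refine ⟨fun l => ext (Y l), fun l => ext (Y1 l), ?_, ?_, ?_, ?_, ?_, ?_⟩
  · intro l
    have hYeq : ∀ x (hx : x ∈ Icc (0:ℝ) 1), ext (Y l) x = α + β * (x:ℂ) + ext (J (J (d l * Y l))) x := by
      intro x hx
      rw [ext_apply _ hx, ext_apply _ hx]
      have := congrArg (fun f : X => f ⟨x, hx⟩) (hYs l)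
      exact this
    have hY1eq : ∀ x (hx : x ∈ Icc (0:ℝ) 1), ext (Y1 l) x = β + ext (J (d l * Y l)) x := by
      intro x hx
      rw [ext_apply _ hx, ext_apply _ hx]
      simp [hY1]
    constructor
    · intro x hx
      have h1 := J_deriv (J (d l * Y l)) hx
      have h2 : HasDerivWithinAt (fun x : ℝ => α + β * (x:ℂ)) β (Icc 0 1) x := by
        have : HasDerivAt (fun x : ℝ => (x:ℂ)) 1 x := Complex.ofRealCLM.hasDerivAt
        simpa using ((this.const_mul β).const_add α).hasDerivWithinAt
      have h3 := (h2.add h1).congr (fun y hy => hYeq y hy) (hYeq x hx)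
      simp only
      rw [hY1eq x hx, ext_apply _ hx]
      exact h3
    · intro x hx
      have h1 := J_deriv (d l * Y l) hx
      have h3 := (h1.const_add β).congr (fun y hy => hY1eq y hy) (hY1eq x hx)
      refine h3.congr_deriv ?_
      simp only
      rw [ext_apply _ hx]
      simp [hd, hc]
  · intro l
    change ext (Y l) 0 = α
    rw [ext_apply _ hzero, hYs, ContinuousMap.add_apply, J_apply]
    simp [hy0]
  · intro l
    change ext (Y1 l) 0 = β
    rw [ext_apply _ hzero, hY1]
    simp [J_apply]
  · intro x hx
    simp only [ext_apply _ hx]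
    exact hev _ hYd _
  · intro x hx
    simp only [ext_apply _ hx]
    exact hev _ hY1d _
  · intro h hh x hx
    set H : X := ⟨fun x => h x, continuousOn_iff_continuous_restrict.1 hh⟩ with hH
    have h1 : Differentiable ℂ (fun l => J (H * Y l)) := J.differentiable.comp (hYd.const_mul H)
    have h2 := hev _ h1 ⟨x, hx⟩
    convert h2 using 2 with l
    rw [J_apply]
    refine intervalIntegral.integral_congr ?_
    intro t ht
    rw [uIcc_of_le hx.1] at ht
    have ht' : t ∈ Icc (0:ℝ) 1 := ⟨ht.1, ht.2.trans hx.2⟩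
    simp only
    rw [ext_apply _ ht', ext_apply _ ht']
    rfl

theorem trig_unique {ι : Type} [Countable ι] (B L : ι → ℝ) (hB : Summable B)
    (h : ∀ s : ℝ, ∑' i, (B i : ℂ) * Complex.exp (s * L i * Complex.I) = 0) (ν : ℝ) :
    ∑' i, (if L i = ν then B i else 0) = 0 := by
  classical
  have hp : Summable (fun i => (B i)⁺) := hB.abs.of_nonneg_of_le (fun i => posPart_nonneg _)
    (fun i => by rw [posPart_def]; exact sup_le (le_abs_self _) (abs_nonneg _))
  have hn : Summable (fun i => (B i)⁻) := hB.abs.of_nonneg_of_le (fun i => negPart_nonneg _)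
    (fun i => by rw [negPart_def]; exact sup_le (neg_le_abs _) (abs_nonneg _))
  set μ : (ι → ℝ) → Measure ℝ := fun c => Measure.sum (fun i => ENNReal.ofReal (c i) • Measure.dirac (L i))
    with hμ
  have hfin : ∀ c : ι → ℝ, Summable c → IsFiniteMeasure (μ c) := by
    intro c hc
    refine ⟨?_⟩
    rw [hμ]
    simp only [Measure.sum_apply _ MeasurableSet.univ, Measure.smul_apply, measure_univ, smul_eq_mul, mul_one]
    exact hc.tsum_ofReal_lt_top
  have hintg : ∀ (c : ι → ℝ), (∀ i, 0 ≤ c i) → ∀ (f : ℝ → ℂ), ∫ x, f x ∂(μ c) = ∑' i, (c i : ℂ) * f (L i) := by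
    intro c hc f
    rw [hμ]
    simp only
    rw [integral_sum_dirac (by simp)]
    congr 1; ext i
    rw [ENNReal.toReal_ofReal (hc i), Complex.real_smul]
  haveI := hfin _ hp
  haveI := hfin _ hn
  have hsub : ∀ f : ℝ → ℂ, (∀ x, ‖f x‖ ≤ 1) → ∑' i, (((B i)⁺ : ℝ) : ℂ) * f (L i) - ∑' i, (((B i)⁻ : ℝ) : ℂ) * f (L i)
      = ∑' i, (B i : ℂ) * f (L i) := by
    intro f hf
    have hs : ∀ c : ι → ℝ, Summable c → (∀ i, 0 ≤ c i) → Summable (fun i => (c i : ℂ) * f (L i)) := by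
      intro c hc hc0
      refine hc.of_norm_bounded ?_
      intro i
      rw [norm_mul, Complex.norm_real, Real.norm_of_nonneg (hc0 i)]
      exact mul_le_of_le_one_right (hc0 i) (hf _)
    rw [← (hs _ hp (fun i => posPart_nonneg _)).tsum_sub (hs _ hn (fun i => negPart_nonneg _))]
    congr 1; ext i
    rw [← sub_mul, ← Complex.ofReal_sub, posPart_sub_negPart]
  have heq : μ (fun i => (B i)⁺) = μ (fun i => (B i)⁻) := by
    apply Measure.ext_of_charFun
    ext s
    rw [charFun_apply_real, charFun_apply_real, hintg _ (fun i => posPart_nonneg _),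
      hintg _ (fun i => negPart_nonneg _), ← sub_eq_zero,
      hsub (fun x : ℝ => Complex.exp (s * x * Complex.I)), h s]
    intro x
    rw [← Complex.ofReal_mul, Complex.norm_exp_ofReal_mul_I]
  have e1 := hintg _ (fun i => posPart_nonneg (B i)) (fun x => if x = ν then 1 else 0)
  have e2 := hintg _ (fun i => negPart_nonneg (B i)) (fun x => if x = ν then 1 else 0)
  have h0 := hsub (fun x => if x = ν then 1 else 0) (fun x => by split_ifs <;> simp)
  rw [heq] at e1
  have h1 := h0.symm.trans (sub_eq_zero.2 (e1.symm.trans e2))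
  have h2 : ((∑' i, (if L i = ν then B i else 0) : ℝ) : ℂ) = 0 := by
    rw [← h1, Complex.ofReal_tsum]
    congr 1; ext i
    split_ifs <;> simp
  exact_mod_cast h2

theorem dirichlet_unique {ι : Type} [Countable ι] (A L : ι → ℝ) (β : ℝ) (hL : ∀ i, -β ≤ L i)
    (hs : ∀ t > 0, Summable (fun i => |A i| * Real.exp (-(L i) * t)))
    (t : ℕ → ℝ) (T1 : ℝ) (hT : 0 < T1) (hinj : Function.Injective t)
    (hlim : Tendsto t atTop (𝓝 T1))
    (h : ∀ m, ∑' i, A i * Real.exp (-(L i) * t m) = 0) (ν : ℝ) :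
    ∑' i, (if L i = ν then A i else 0) = 0 := by
  classical
  set F : ι → ℂ → ℂ := fun i w => (A i : ℂ) * Complex.exp (-((L i + β : ℝ) : ℂ) * w) with hF
  set U : Set ℂ := {w | T1 / 2 < w.re} with hU
  have hUo : IsOpen U := isOpen_lt continuous_const Complex.continuous_re
  have hs' : ∀ t > 0, Summable (fun i => |A i| * Real.exp (-(L i + β) * t)) := by
    intro t ht
    refine ((hs t ht).mul_right (Real.exp (-β * t))).congr ?_
    intro i
    rw [mul_assoc, ← Real.exp_add]; congr 2; ring
  have hd : DifferentiableOn ℂ (fun w => ∑' i, F i w) U := by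
    refine Complex.differentiableOn_tsum_of_summable_norm (hs' (T1 / 2) (by linarith)) ?_ hUo ?_
    · intro i
      apply Differentiable.differentiableOn
      simp only [hF]; fun_prop
    · intro i w hw
      simp only [hF, norm_mul, Complex.norm_real, Complex.norm_exp, Real.norm_eq_abs]
      gcongr
      have : (-((L i + β : ℝ) : ℂ) * w).re = -(L i + β) * w.re := by
        rw [← Complex.ofReal_neg, Complex.re_ofReal_mul]
      rw [this]
      have h1 := hL i
      have h2 : T1 / 2 < w.re := hw
      nlinarith
  have hT1U : (T1 : ℂ) ∈ U := by simp [hU]; linarith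
  have hzero : EqOn (fun w => ∑' i, F i w) 0 U := by
    refine (hd.analyticOnNhd hUo).eqOn_zero_of_preconnected_of_frequently_eq_zero
      (convex_halfSpace_re_gt _).isPreconnected hT1U ?_
    have htend : Tendsto (fun m => ((t m : ℝ) : ℂ)) atTop (𝓝[≠] (T1 : ℂ)) := by
      apply tendsto_nhdsWithin_of_tendsto_nhds_of_eventually_within
      · exact (Complex.continuous_ofReal.tendsto T1).comp hlim
      · have : ∀ᶠ m in atTop, t m ≠ T1 := by
          by_cases hex : ∃ m0, t m0 = T1
          · obtain ⟨m0, hm0⟩ := hex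
            filter_upwards [eventually_gt_atTop m0] with m hm hh
            exact hm.ne' (hinj (hh.trans hm0.symm))
          · exact Eventually.of_forall (fun m hm => hex ⟨m, hm⟩)
        filter_upwards [this] with m hm
        simpa using hm
    refine htend.frequently (Eventually.frequently (Eventually.of_forall ?_))
    intro m
    have : ∑' i, F i (t m : ℂ) = ((Real.exp (-β * t m) * ∑' i, A i * Real.exp (-(L i) * t m) : ℝ) : ℂ) := by
      rw [← tsum_mul_left, Complex.ofReal_tsum]
      congr 1; ext i
      simp only [hF]
      push_cast
      rw [mul_left_comm, ← Complex.exp_add]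
      congr 2; ring
    rw [this, h m]; simp
  have key := trig_unique (fun i => A i * Real.exp (-(L i + β) * T1)) (fun i => L i + β) ?_ ?_ (ν + β)
  · have : ∀ i, (if L i + β = ν + β then A i * Real.exp (-(L i + β) * T1) else 0)
        = (if L i = ν then A i else 0) * Real.exp (-(ν + β) * T1) := by
      intro i
      by_cases hi : L i = ν
      · simp [hi]
      · simp [hi]
    simp only [this] at key
    rw [tsum_mul_right] at key
    exact (mul_eq_zero.1 key).resolve_right (Real.exp_pos _).ne'
  · refine (hs' T1 hT).of_norm_bounded ?_
    intro i
    rw [norm_mul, Real.norm_eq_abs, Real.norm_of_nonneg (Real.exp_pos _).le]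
  · intro s
    have hmem : (T1 : ℂ) - s * Complex.I ∈ U := by simp [hU]; linarith
    have := hzero hmem
    simp only [hF, Pi.zero_apply] at this
    rw [← this]
    congr 1; ext i
    push_cast
    rw [mul_assoc, ← Complex.exp_add]
    congr 2; ring

theorem dirichlet_unique_two (a₁ a₂ l₁ l₂ : ℕ → ℝ) (h₁ : StrictMono l₁) (h₂ : StrictMono l₂)
    (hs₁ : ∀ t > 0, Summable (fun i => |a₁ i| * Real.exp (-(l₁ i) * t)))
    (hs₂ : ∀ t > 0, Summable (fun i => |a₂ i| * Real.exp (-(l₂ i) * t)))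
    (t : ℕ → ℝ) (T1 : ℝ) (hT : 0 < T1) (hpos : ∀ m, 0 < t m) (hinj : Function.Injective t)
    (hlim : Tendsto t atTop (𝓝 T1))
    (h : ∀ m, ∑' i, a₁ i * Real.exp (-(l₁ i) * t m) = ∑' i, a₂ i * Real.exp (-(l₂ i) * t m)) (ν : ℝ) :
    ∑' i, (if l₁ i = ν then a₁ i else 0) = ∑' i, (if l₂ i = ν then a₂ i else 0) := by
  have hab : ∀ (a l : ℕ → ℝ) (t : ℝ), Summable (fun i => |a i| * Real.exp (-(l i) * t)) →
      Summable (fun i => a i * Real.exp (-(l i) * t)) := by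
    intro a l t h
    refine h.of_norm_bounded ?_
    intro i
    rw [norm_mul, Real.norm_eq_abs, Real.norm_of_nonneg (Real.exp_pos _).le]
  have hfin : ∀ (a l : ℕ → ℝ), StrictMono l → Summable (fun i => if l i = ν then a i else 0) := by
    intro a l hl
    apply summable_of_finite_support
    refine Set.Finite.subset (Set.Subsingleton.finite (s := {i | l i = ν}) ?_) ?_
    · intro i hi j hj
      exact hl.injective (hi.trans hj.symm)
    · intro i hi
      by_contra hc
      simp only [mem_setOf_eq] at hc
      simp [hc] at hi
  have key := dirichlet_unique (ι := ℕ ⊕ ℕ) (Sum.elim a₁ (fun i => -a₂ i)) (Sum.elim l₁ l₂)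
    (|l₁ 0| + |l₂ 0|) ?_ ?_ t T1 hT hinj hlim ?_ ν
  · have key' : (∑' i, if l₁ i = ν then a₁ i else 0) + ∑' i, (if l₂ i = ν then -a₂ i else 0) = 0 :=
      (Summable.tsum_sum (f := fun i => if Sum.elim l₁ l₂ i = ν then Sum.elim a₁ (fun i => -a₂ i) i else 0)
        (hfin a₁ l₁ h₁) (hfin (fun i => -a₂ i) l₂ h₂)).symm.trans key
    have : ∀ i, (if l₂ i = ν then -a₂ i else 0) = - (if l₂ i = ν then a₂ i else 0) := by
      intro i; split_ifs <;> simp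
    simp only [this] at key'
    rw [tsum_neg] at key'
    linarith
  · rintro (i | i)
    · have := h₁.monotone (Nat.zero_le i)
      have h1 := neg_abs_le (l₁ 0)
      have h2 := abs_nonneg (l₂ 0)
      simp only [Sum.elim_inl]; linarith
    · have := h₂.monotone (Nat.zero_le i)
      have h1 := neg_abs_le (l₂ 0)
      have h2 := abs_nonneg (l₁ 0)
      simp only [Sum.elim_inr]; linarith
  · intro t ht
    apply Summable.sum
    · exact hs₁ t ht
    · refine (hs₂ t ht).congr ?_
      intro i
      simp
  · intro m
    rw [Summable.tsum_sum]
    · simp only [Sum.elim_inl, Sum.elim_inr, neg_mul a₂]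
      simp only [neg_mul]
      rw [tsum_neg]
      have := h m
      simp only [neg_mul] at this
      linarith
    · exact hab a₁ l₁ _ (hs₁ _ (hpos m))
    · exact hab (fun i => -a₂ i) l₂ _ ((hs₂ _ (hpos m)).congr (fun i => by simp))

theorem prim_deriv {f : ℝ → ℂ} (hf : ContinuousOn f (Icc 0 1)) {x : ℝ} (hx : x ∈ Ioo (0:ℝ) 1) :
    HasDerivAt (fun x => ∫ t in (0:ℝ)..x, f t) (f x) x := by
  refine intervalIntegral.integral_hasDerivAt_right ?_ ?_ ?_
  · refine ContinuousOn.intervalIntegrable ?_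
    rw [uIcc_of_le hx.1.le]
    exact hf.mono (Icc_subset_Icc le_rfl hx.2.le)
  · exact (hf.mono Ioo_subset_Icc_self).stronglyMeasurableAtFilter isOpen_Ioo x hx
  · exact hf.continuousAt (Icc_mem_nhds hx.1 hx.2)

theorem ii_of_cont {f : ℝ → ℂ} (hf : ContinuousOn f (Icc 0 1)) {a b : ℝ} (ha : a ∈ Icc (0:ℝ) 1)
    (hb : b ∈ Icc (0:ℝ) 1) : IntervalIntegrable f volume a b := by
  refine ContinuousOn.intervalIntegrable (hf.mono ?_)
  exact (convex_Icc (0:ℝ) 1).ordConnected.uIcc_subset ha hb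

theorem sqr_tendsto {L : ℝ} (hL : 0 < L) :
    Tendsto (fun n : ℕ => ((n:ℝ) + 1 / 2) * Real.pi / L) atTop atTop := by
  refine Tendsto.atTop_div_const hL ?_
  refine Tendsto.atTop_mul_const Real.pi_pos ?_
  exact tendsto_atTop_add_const_right _ _ tendsto_natCast_atTop_atTop

theorem OnSq_I {r : ℝ} (hr : 0 ≤ r) : OnSq r ((r:ℂ) * Complex.I) := by
  right
  simp [abs_of_nonneg hr, hr]

theorem liou_inv (f : ℂ → ℂ) (hf : Differentiable ℂ f) {L : ℝ} (hL : 0 < L) (C : ℝ)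
    (hC : ∀ᶠ n : ℕ in atTop, ∀ z, OnSq (((n:ℝ) + 1 / 2) * Real.pi / L) z → ‖f (z ^ 2)‖ ≤ C / ‖z‖) :
    ∀ l, f l = 0 := by
  have hr := sqr_tendsto hL
  refine square_liouville f hf _ hr |C| ?_ ?_
  · filter_upwards [hC, hr.eventually_ge_atTop 1] with n hn h1 z hz
    have h2 := h1.trans hz.le_norm
    refine (hn z hz).trans ?_
    refine (div_le_div_of_nonneg_right (le_abs_self C) (norm_nonneg z)).trans ?_
    exact div_le_self (abs_nonneg _) h2
  · rw [tendsto_zero_iff_norm_tendsto_zero]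
    refine squeeze_zero' (Eventually.of_forall fun n => norm_nonneg _) ?_ (hr.const_div_atTop C)
    filter_upwards [hC, hr.eventually_ge_atTop 1] with n hn h1
    have := hn _ (OnSq_I (zero_le_one.trans h1))
    refine this.trans (le_of_eq ?_)
    rw [norm_mul, Complex.norm_I, mul_one, Complex.norm_real, Real.norm_of_nonneg (zero_le_one.trans h1)]

theorem liou_exp (f : ℂ → ℂ) (hf : Differentiable ℂ f) {L c : ℝ} (hL : 0 < L) (hc : 0 < c) (C : ℝ)
    (hC0 : 0 ≤ C)
    (hC : ∀ᶠ n : ℕ in atTop, ∀ z, OnSq (((n:ℝ) + 1 / 2) * Real.pi / L) z →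
      ‖f (z ^ 2)‖ ≤ C * Real.exp (-(c * |z.im|))) :
    ∀ l, f l = 0 := by
  have hr := sqr_tendsto hL
  refine square_liouville f hf _ hr C ?_ ?_
  · filter_upwards [hC] with n hn z hz
    refine (hn z hz).trans (mul_le_of_le_one_right hC0 ?_)
    rw [Real.exp_le_one_iff]
    have := abs_nonneg z.im
    have := mul_nonneg hc.le this
    linarith
  · rw [tendsto_zero_iff_norm_tendsto_zero]
    have h1 : Tendsto (fun n : ℕ => C * Real.exp (-(c * (((n:ℝ) + 1 / 2) * Real.pi / L)))) atTop (𝓝 (C * 0)) := by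
      refine Tendsto.const_mul _ ?_
      refine Real.tendsto_exp_neg_atTop_nhds_zero.comp ?_
      exact hr.const_mul_atTop hc
    rw [mul_zero] at h1
    refine squeeze_zero' (Eventually.of_forall fun n => norm_nonneg _) ?_ h1
    filter_upwards [hC, hr.eventually_ge_atTop 1] with n hn h1
    have := hn _ (OnSq_I (zero_le_one.trans h1))
    refine this.trans (le_of_eq ?_)
    congr 4
    simp only [Complex.mul_im, Complex.ofReal_re, Complex.I_im, Complex.ofReal_im, Complex.I_re]
    rw [mul_one, mul_zero, add_zero, abs_of_nonneg (zero_le_one.trans h1)]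

/-- A fundamental system of solutions. -/
structure Fund (V : ℝ → ℝ) where
  C : ℂ → ℝ → ℂ
  C' : ℂ → ℝ → ℂ
  S : ℂ → ℝ → ℂ
  S' : ℂ → ℝ → ℂ
  hV : ContinuousOn V (Icc 0 1)
  hC : ∀ l, IsSol V l (C l) (C' l)
  hS : ∀ l, IsSol V l (S l) (S' l)
  C0 : ∀ l, C l 0 = 1
  C'0 : ∀ l, C' l 0 = 0
  S0 : ∀ l, S l 0 = 0
  S'0 : ∀ l, S' l 0 = 1
  Cd : ∀ x ∈ Icc (0:ℝ) 1, Differentiable ℂ (fun l => C l x)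
  C'd : ∀ x ∈ Icc (0:ℝ) 1, Differentiable ℂ (fun l => C' l x)
  Sd : ∀ x ∈ Icc (0:ℝ) 1, Differentiable ℂ (fun l => S l x)
  S'd : ∀ x ∈ Icc (0:ℝ) 1, Differentiable ℂ (fun l => S' l x)
  CI : ∀ h : ℝ → ℂ, ContinuousOn h (Icc 0 1) → ∀ x ∈ Icc (0:ℝ) 1,
        Differentiable ℂ (fun l => ∫ t in (0:ℝ)..x, h t * C l t)
  SI : ∀ h : ℝ → ℂ, ContinuousOn h (Icc 0 1) → ∀ x ∈ Icc (0:ℝ) 1,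
        Differentiable ℂ (fun l => ∫ t in (0:ℝ)..x, h t * S l t)

theorem exists_Fund {V : ℝ → ℝ} (hV : ContinuousOn V (Icc 0 1)) : Nonempty (Fund V) := by
  obtain ⟨C, C', h1, h2, h3, h4, h5, h6⟩ := exists_fund V hV 1 0
  obtain ⟨S, S', g1, g2, g3, g4, g5, g6⟩ := exists_fund V hV 0 1
  exact ⟨⟨C, C', S, S', hV, h1, g1, h2, h3, g2, g3, h4, h5, g4, g5, h6, g6⟩⟩

theorem zero_mem01 : (0:ℝ) ∈ Icc (0:ℝ) 1 := ⟨le_rfl, zero_le_one⟩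
theorem one_mem01 : (1:ℝ) ∈ Icc (0:ℝ) 1 := ⟨zero_le_one, le_rfl⟩

namespace Fund

variable {V : ℝ → ℝ} (F : Fund V)

theorem wr (l : ℂ) {x : ℝ} (hx : x ∈ Icc (0:ℝ) 1) : F.C l x * F.S' l x - F.C' l x * F.S l x = 1 := by
  rw [(F.hC l).wronsk_const (F.hS l) zero_mem01 hx, F.C0, F.C'0, F.S0, F.S'0]; ring

def k (l : ℂ) (x t : ℝ) : ℂ := F.C l t * F.S l x - F.S l t * F.C l x
def k' (l : ℂ) (x t : ℝ) : ℂ := F.C l t * F.S' l x - F.S l t * F.C' l x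
def c (l : ℂ) (x t : ℝ) : ℂ := F.S' l t * F.C l x - F.C' l t * F.S l x
def c' (l : ℂ) (x t : ℝ) : ℂ := F.S' l t * F.C' l x - F.C' l t * F.S' l x

theorem ksol (l : ℂ) (t : ℝ) : IsSol V l (fun x => F.k l x t) (fun x => F.k' l x t) := by
  have := (F.hS l).lin (F.hC l) (F.C l t) (-F.S l t)
  have e1 : (fun x => F.k l x t) = fun x => F.C l t * F.S l x + -F.S l t * F.C l x := by
    ext x; simp only [k]; ring
  have e2 : (fun x => F.k' l x t) = fun x => F.C l t * F.S' l x + -F.S l t * F.C' l x := by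
    ext x; simp only [k']; ring
  rw [e1, e2]; exact this

theorem csol (l : ℂ) (t : ℝ) : IsSol V l (fun x => F.c l x t) (fun x => F.c' l x t) := by
  have := (F.hC l).lin (F.hS l) (F.S' l t) (-F.C' l t)
  have e1 : (fun x => F.c l x t) = fun x => F.S' l t * F.C l x + -F.C' l t * F.S l x := by
    ext x; simp only [c]; ring
  have e2 : (fun x => F.c' l x t) = fun x => F.S' l t * F.C' l x + -F.C' l t * F.S' l x := by
    ext x; simp only [c']; ring
  rw [e1, e2]; exact this

theorem k_self (l : ℂ) (t : ℝ) : F.k l t t = 0 := by simp only [k]; ring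
theorem k'_self (l : ℂ) {t : ℝ} (ht : t ∈ Icc (0:ℝ) 1) : F.k' l t t = 1 := by
  rw [← F.wr l ht]; simp only [k']; ring
theorem c_self (l : ℂ) {t : ℝ} (ht : t ∈ Icc (0:ℝ) 1) : F.c l t t = 1 := by
  rw [← F.wr l ht]; simp only [c]; ring
theorem c'_self (l : ℂ) (t : ℝ) : F.c' l t t = 0 := by simp only [c']; ring

theorem ck_wr (l : ℂ) {x t : ℝ} (hx : x ∈ Icc (0:ℝ) 1) (ht : t ∈ Icc (0:ℝ) 1) :
    F.c l x t * F.k' l x t - F.c' l x t * F.k l x t = 1 := by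
  rw [(F.csol l t).wronsk_const (F.ksol l t) ht hx, k_self, F.k'_self l ht, F.c_self l ht]; ring

theorem S_eq_k (l : ℂ) (x : ℝ) : F.S l x = F.k l x 0 := by simp [k, F.C0, F.S0]

theorem kd {x t : ℝ} (hx : x ∈ Icc (0:ℝ) 1) (ht : t ∈ Icc (0:ℝ) 1) :
    Differentiable ℂ (fun l => F.k l x t) :=
  ((F.Cd t ht).mul (F.Sd x hx)).sub ((F.Sd t ht).mul (F.Cd x hx))
theorem k'd {x t : ℝ} (hx : x ∈ Icc (0:ℝ) 1) (ht : t ∈ Icc (0:ℝ) 1) :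
    Differentiable ℂ (fun l => F.k' l x t) :=
  ((F.Cd t ht).mul (F.S'd x hx)).sub ((F.Sd t ht).mul (F.C'd x hx))
theorem cd {x t : ℝ} (hx : x ∈ Icc (0:ℝ) 1) (ht : t ∈ Icc (0:ℝ) 1) :
    Differentiable ℂ (fun l => F.c l x t) :=
  ((F.S'd t ht).mul (F.Cd x hx)).sub ((F.C'd t ht).mul (F.Sd x hx))
theorem c'd {x t : ℝ} (hx : x ∈ Icc (0:ℝ) 1) (ht : t ∈ Icc (0:ℝ) 1) :
    Differentiable ℂ (fun l => F.c' l x t) :=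
  ((F.S'd t ht).mul (F.C'd x hx)).sub ((F.C'd t ht).mul (F.S'd x hx))

theorem k_bound : ∃ K, 0 < K ∧ ∀ (z : ℂ) (x t : ℝ), 1 ≤ ‖z‖ → x ∈ Icc (0:ℝ) 1 → t ∈ Icc (0:ℝ) 1 →
    ‖F.k (z ^ 2) x t‖ ≤ K * Real.exp (|z.im| * |x - t|) / ‖z‖ := by
  obtain ⟨K, hK, h⟩ := IsSol.sine_bound F.hV
  refine ⟨K, hK, ?_⟩
  intro z x t hz hx ht
  exact h z _ _ t hz (F.ksol _ t) ht (F.k_self _ t) (F.k'_self _ ht) x hx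

theorem S_bound {K : ℝ} (hK : ∀ (z : ℂ) (x t : ℝ), 1 ≤ ‖z‖ → x ∈ Icc (0:ℝ) 1 → t ∈ Icc (0:ℝ) 1 →
    ‖F.k (z ^ 2) x t‖ ≤ K * Real.exp (|z.im| * |x - t|) / ‖z‖) (z : ℂ) (x : ℝ) (hz : 1 ≤ ‖z‖)
    (hx : x ∈ Icc (0:ℝ) 1) : ‖F.S (z ^ 2) x‖ ≤ K * Real.exp (|z.im| * x) / ‖z‖ := by
  have := hK z x 0 hz hx zero_mem01
  rwa [← F.S_eq_k, sub_zero, abs_of_nonneg hx.1] at this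

theorem k_lower {x0 L : ℝ} (hL : 0 < L) (h0 : 0 ≤ x0) (h1 : x0 + L ≤ 1) :
    ∀ᶠ n : ℕ in atTop, ∀ z, OnSq (((n:ℝ) + 1 / 2) * Real.pi / L) z → 1 ≤ ‖z‖ ∧
      Real.exp (|z.im| * L) / (8 * ‖z‖) ≤ ‖F.k (z ^ 2) (x0 + L) x0‖ := by
  obtain ⟨K, hK, h⟩ := IsSol.sine_asymp F.hV
  filter_upwards [(sqr_tendsto hL).eventually_ge_atTop (1 + 8 * K)] with n hn z hz
  have hz1 := hn.trans hz.le_norm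
  have hz2 : 1 ≤ ‖z‖ := by linarith
  refine ⟨hz2, ?_⟩
  have hx0 : x0 ∈ Icc (0:ℝ) 1 := ⟨h0, by linarith⟩
  have h3 := h z _ _ x0 hz2 (F.ksol _ x0) hx0 (F.k_self _ x0) (F.k'_self _ hx0) (x0 + L)
    ⟨by linarith, h1⟩
  rw [add_sub_cancel_left] at h3
  have h4 := sin_lower hL n z hz
  have h5 := norm_sub_norm_le (Complex.sin (z * (L : ℝ)) / z) (F.k (z ^ 2) (x0 + L) x0)
  rw [norm_sub_rev] at h5
  rw [norm_div] at h5
  have hpos : 0 < ‖z‖ := by linarith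
  set E := Real.exp (|z.im| * L) with hE
  have hE0 : 0 < E := Real.exp_pos _
  have h6 : E / 4 / ‖z‖ ≤ ‖Complex.sin (z * (L : ℝ))‖ / ‖z‖ := by gcongr
  have h7 : K * E / ‖z‖ ^ 2 ≤ E / (8 * ‖z‖) := by
    rw [div_le_div_iff₀ (by positivity) (by positivity)]
    have : 0 ≤ E * ‖z‖ := by positivity
    nlinarith
  have h8 : E / 4 / ‖z‖ = E / (8 * ‖z‖) + E / (8 * ‖z‖) := by field_simp; norm_num
  linarith

theorem S_lower {L : ℝ} (hL : 0 < L) (h1 : L ≤ 1) :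
    ∀ᶠ n : ℕ in atTop, ∀ z, OnSq (((n:ℝ) + 1 / 2) * Real.pi / L) z → 1 ≤ ‖z‖ ∧
      Real.exp (|z.im| * L) / (8 * ‖z‖) ≤ ‖F.S (z ^ 2) L‖ := by
  have := F.k_lower hL le_rfl (by simpa using h1)
  simpa [← F.S_eq_k] using this

/-- bound of the transform of `h` supported in `[0,e]` -/
theorem int_bound {K : ℝ} (hK0 : 0 < K) (hK : ∀ (z : ℂ) (x t : ℝ), 1 ≤ ‖z‖ → x ∈ Icc (0:ℝ) 1 →
    t ∈ Icc (0:ℝ) 1 → ‖F.k (z ^ 2) x t‖ ≤ K * Real.exp (|z.im| * |x - t|) / ‖z‖)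
    {h : ℝ → ℂ} {H : ℝ} (hH0 : 0 ≤ H) (hH : ∀ x ∈ Icc (0:ℝ) 1, ‖h x‖ ≤ H) {e y : ℝ}
    (hy : y ∈ Icc (0:ℝ) 1) (hs : ∀ x ∈ Icc (0:ℝ) 1, x ≤ y → e < x → h x = 0) (z : ℂ)
    (hz : 1 ≤ ‖z‖) :
    ‖∫ t in (0:ℝ)..y, h t * F.S (z ^ 2) t‖ ≤ H * K * Real.exp (|z.im| * e) / ‖z‖ := by
  have hpos : 0 < ‖z‖ := by linarith
  have := intervalIntegral.norm_integral_le_of_norm_le_const (a := 0) (b := y)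
    (f := fun t => h t * F.S (z ^ 2) t) (C := H * K * Real.exp (|z.im| * e) / ‖z‖) ?_
  · refine this.trans ?_
    rw [sub_zero, abs_of_nonneg hy.1]
    exact mul_le_of_le_one_right (by positivity) hy.2
  · intro t ht
    rw [uIoc_of_le hy.1] at ht
    have ht' : t ∈ Icc (0:ℝ) 1 := ⟨ht.1.le, ht.2.trans hy.2⟩
    by_cases hte : e < t
    · simp only [hs t ht' ht.2 hte, zero_mul, norm_zero]; positivity
    · rw [norm_mul]
      calc _ ≤ H * (K * Real.exp (|z.im| * t) / ‖z‖) := by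
            gcongr
            · exact hH t ht'
            · exact F.S_bound hK z t hz ht'
        _ ≤ H * (K * Real.exp (|z.im| * e) / ‖z‖) := by
            gcongr
            exact not_lt.1 hte
        _ = _ := by ring

/-- completeness -/
theorem complete {h : ℝ → ℂ} (hh : ContinuousOn h (Icc 0 1))
    (h0 : ∀ l, ∫ t in (0:ℝ)..1, h t * F.S l t = 0) : ∀ x ∈ Icc (0:ℝ) 1, h x = 0 := by
  obtain ⟨K, hK0, hK⟩ := F.k_bound
  obtain ⟨H', hH'⟩ := isCompact_Icc.exists_bound_of_continuousOn hh
  obtain ⟨H, hH0, hH⟩ : ∃ H, 0 ≤ H ∧ ∀ x ∈ Icc (0:ℝ) 1, ‖h x‖ ≤ H :=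
    ⟨max H' 0, le_max_right _ _, fun x hx => (hH' x hx).trans (le_max_left _ _)⟩
  set A : ℂ → ℝ → ℂ := fun l x => ∫ t in (0:ℝ)..x, h t * F.C l t with hA
  set B : ℂ → ℝ → ℂ := fun l x => ∫ t in (0:ℝ)..x, h t * F.S l t with hB
  have hcC : ∀ l, ContinuousOn (fun t => h t * F.C l t) (Icc 0 1) := fun l => hh.mul (F.hC l).cont
  have hcS : ∀ l, ContinuousOn (fun t => h t * F.S l t) (Icc 0 1) := fun l => hh.mul (F.hS l).cont
  have key : ∀ x ∈ Icc (0:ℝ) 1, ∀ l, F.S l x * (A l 1 - A l x) - F.C l x * (B l 1 - B l x) = 0 := by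
    intro x hx
    refine liou_inv (fun l => F.S l x * (A l 1 - A l x) - F.C l x * (B l 1 - B l x)) ?_ one_pos
      (16 * H * K ^ 2) ?_
    · exact ((F.Sd x hx).mul ((F.CI h hh 1 one_mem01).sub (F.CI h hh x hx))).sub
        ((F.Cd x hx).mul ((F.SI h hh 1 one_mem01).sub (F.SI h hh x hx)))
    · filter_upwards [F.S_lower one_pos le_rfl] with n hn z hz
      obtain ⟨hz1, hlow⟩ := hn z hz
      have hpos : 0 < ‖z‖ := by linarith
      set u := F.S (z ^ 2) x * (A (z ^ 2) 1 - A (z ^ 2) x) - F.C (z ^ 2) x * (B (z ^ 2) 1 - B (z ^ 2) x) with hu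
      have hintg : ∫ t in x..1, h t * F.k (z ^ 2) 1 t =
          F.S (z ^ 2) 1 * (A (z ^ 2) 1 - A (z ^ 2) x) - F.C (z ^ 2) 1 * (B (z ^ 2) 1 - B (z ^ 2) x) := by
        simp only [hA, hB]
        rw [intervalIntegral.integral_interval_sub_left (ii_of_cont (hcC _) zero_mem01 one_mem01)
          (ii_of_cont (hcC _) zero_mem01 hx),
          intervalIntegral.integral_interval_sub_left (ii_of_cont (hcS _) zero_mem01 one_mem01)
          (ii_of_cont (hcS _) zero_mem01 hx), ← intervalIntegral.integral_const_mul,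
          ← intervalIntegral.integral_const_mul, ← intervalIntegral.integral_sub]
        · congr 1; ext t; simp only [k]; ring
        · exact (ii_of_cont (hcC _) hx one_mem01).const_mul _
        · exact (ii_of_cont (hcS _) hx one_mem01).const_mul _
      have hB1 : B (z ^ 2) 1 = 0 := h0 _
      have hid : F.S (z ^ 2) 1 * u = F.S (z ^ 2) x * (∫ t in x..1, h t * F.k (z ^ 2) 1 t)
          + F.k (z ^ 2) 1 x * B (z ^ 2) x := by
        rw [hintg, hu, hB1, k]; ring
      have b1 : ‖∫ t in x..1, h t * F.k (z ^ 2) 1 t‖ ≤ H * K * Real.exp (|z.im| * (1 - x)) / ‖z‖ := by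
        have := intervalIntegral.norm_integral_le_of_norm_le_const (a := x) (b := 1)
          (f := fun t => h t * F.k (z ^ 2) 1 t) (C := H * K * Real.exp (|z.im| * (1 - x)) / ‖z‖) ?_
        · refine this.trans ?_
          rw [abs_of_nonneg (by linarith [hx.2] : 0 ≤ 1 - x)]
          exact mul_le_of_le_one_right (by positivity) (by linarith [hx.1])
        · intro t ht
          rw [uIoc_of_le hx.2] at ht
          have ht' : t ∈ Icc (0:ℝ) 1 := ⟨hx.1.trans ht.1.le, ht.2⟩
          rw [norm_mul]
          calc _ ≤ H * (K * Real.exp (|z.im| * |1 - t|) / ‖z‖) := by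
                gcongr
                · exact hH t ht'
                · exact hK z 1 t hz1 one_mem01 ht'
            _ ≤ H * (K * Real.exp (|z.im| * (1 - x)) / ‖z‖) := by
                rw [abs_of_nonneg (by linarith [ht.2] : 0 ≤ 1 - t)]
                gcongr
                exact ht.1.le
            _ = _ := by ring
      have b2 : ‖B (z ^ 2) x‖ ≤ H * K * Real.exp (|z.im| * x) / ‖z‖ :=
        F.int_bound hK0 hK hH0 hH hx (fun t _ h1 h2 => absurd h1 (not_le.2 h2)) z hz1
      have b3 := F.S_bound hK z x hz1 hx
      have b4 := hK z 1 x hz1 one_mem01 hx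
      rw [abs_of_nonneg (by linarith [hx.2] : 0 ≤ 1 - x)] at b4
      have hE : Real.exp (|z.im| * x) * Real.exp (|z.im| * (1 - x)) = Real.exp (|z.im| * 1) := by
        rw [← Real.exp_add]; congr 1; ring
      have b5 : ‖F.S (z ^ 2) 1‖ * ‖u‖ ≤ 2 * H * K ^ 2 * Real.exp (|z.im| * 1) / ‖z‖ ^ 2 := by
        rw [← norm_mul, hid]
        refine (norm_add_le _ _).trans ?_
        rw [norm_mul, norm_mul]
        calc _ ≤ (K * Real.exp (|z.im| * x) / ‖z‖) * (H * K * Real.exp (|z.im| * (1 - x)) / ‖z‖)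
              + (K * Real.exp (|z.im| * (1 - x)) / ‖z‖) * (H * K * Real.exp (|z.im| * x) / ‖z‖) := by
              gcongr
          _ = _ := by rw [← hE]; field_simp; ring
      set E := Real.exp (|z.im| * 1) with hEdef
      have hE0 : 0 < E := Real.exp_pos _
      have b6 : E / (8 * ‖z‖) * ‖u‖ ≤ 2 * H * K ^ 2 * E / ‖z‖ ^ 2 :=
        (mul_le_mul_of_nonneg_right hlow (norm_nonneg u)).trans b5
      have b7 : E / (8 * ‖z‖) * ‖u‖ ≤ E / (8 * ‖z‖) * (16 * H * K ^ 2 / ‖z‖) := by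
        refine b6.trans (le_of_eq ?_)
        field_simp; ring
      exact le_of_mul_le_mul_left b7 (by positivity)
  have hAd : ∀ x ∈ Ioo (0:ℝ) 1, HasDerivAt (fun x => A 0 1 - A 0 x) (-(h x * F.C 0 x)) x := by
    intro x hx
    exact (prim_deriv (hcC 0) hx).const_sub (A 0 1)
  have hBd : ∀ x ∈ Ioo (0:ℝ) 1, HasDerivAt (fun x => B 0 1 - B 0 x) (-(h x * F.S 0 x)) x := by
    intro x hx
    exact (prim_deriv (hcS 0) hx).const_sub (B 0 1)
  have loc0 : ∀ (f : ℝ → ℂ) (f' : ℂ), (∀ x ∈ Ioo (0:ℝ) 1, f x = 0) → ∀ x ∈ Ioo (0:ℝ) 1,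
      HasDerivAt f f' x → f' = 0 := by
    intro f f' hf x hx hd
    have : HasDerivAt f 0 x := (hasDerivAt_const x (0:ℂ)).congr_of_eventuallyEq (by
      filter_upwards [isOpen_Ioo.mem_nhds hx] with y hy using hf y hy)
    exact hd.unique this
  have hAB : ∀ x ∈ Ioo (0:ℝ) 1, A 0 1 - A 0 x = 0 ∧ B 0 1 - B 0 x = 0 := by
    intro x hx
    have hx' := Ioo_subset_Icc_self hx
    have e1 := key x hx' 0
    have e2 := loc0 _ _ (fun x hx => key x (Ioo_subset_Icc_self hx) 0) x hx
      ((((F.hS 0).hd1 hx).mul (hAd x hx)).sub (((F.hC 0).hd1 hx).mul (hBd x hx)))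
    have w := F.wr 0 hx'
    constructor
    · linear_combination (-(A 0 1 - A 0 x)) * w + F.C 0 x * e2 - F.C' 0 x * e1
    · linear_combination (-(B 0 1 - B 0 x)) * w + F.S 0 x * e2 - F.S' 0 x * e1
  have hin : ∀ x ∈ Ioo (0:ℝ) 1, h x = 0 := by
    intro x hx
    have e1 := loc0 _ _ (fun x hx => (hAB x hx).1) x hx (hAd x hx)
    have e2 := loc0 _ _ (fun x hx => (hAB x hx).2) x hx (hBd x hx)
    have w := F.wr 0 (Ioo_subset_Icc_self hx)
    linear_combination (-(h x)) * w - F.S' 0 x * e1 + F.C' 0 x * e2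
  have : EqOn h (fun _ => 0) (Icc 0 1) := by
    refine EqOn.of_subset_closure (s := Ioo 0 1) hin hh continuousOn_const Ioo_subset_Icc_self ?_
    rw [closure_Ioo (by norm_num)]
  exact this

end Fund

theorem uniq01 : UniqueDiffOn ℝ (Icc (0:ℝ) 1) := uniqueDiffOn_Icc one_pos

theorem eigen_sol {V : ℝ → ℝ} (hV : ContinuousOn V (Icc 0 1)) {μ : ℝ} {ψ : ℝ → ℝ}
    (h : IsDirichletEigenpair V μ ψ) :
    IsSol V (μ : ℂ) (fun x => (ψ x : ℂ)) (fun x => ((derivWithin ψ (Icc 0 1) x : ℝ) : ℂ)) := by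
  obtain ⟨h1, -, h3, -, -⟩ := h
  have hd1 : DifferentiableOn ℝ ψ (Icc 0 1) := h1.differentiableOn (by norm_num)
  have h2 : ContDiffOn ℝ 1 (derivWithin ψ (Icc 0 1)) (Icc 0 1) :=
    h1.derivWithin uniq01 (by norm_num)
  have hd2 : DifferentiableOn ℝ (derivWithin ψ (Icc 0 1)) (Icc 0 1) := h2.differentiableOn (by norm_num)
  have hc2 : ContinuousOn (derivWithin (derivWithin ψ (Icc 0 1)) (Icc 0 1)) (Icc 0 1) :=
    h2.continuousOn_derivWithin uniq01 (by norm_num)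
  have heq : EqOn (derivWithin (derivWithin ψ (Icc 0 1)) (Icc 0 1)) (fun x => (V x - μ) * ψ x) (Icc 0 1) := by
    refine EqOn.of_subset_closure (s := Ioo 0 1) ?_ hc2
      ((hV.sub continuousOn_const).mul hd1.continuousOn) Ioo_subset_Icc_self ?_
    · intro x hx
      have := h3 x hx
      simp only; linarith
    · rw [closure_Ioo (by norm_num)]
  constructor
  · intro x hx
    exact (hd1 x hx).hasDerivWithinAt.ofReal_comp
  · intro x hx
    have := (hd2 x hx).hasDerivWithinAt.ofReal_comp
    rw [heq hx] at this
    refine this.congr_deriv ?_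
    push_cast; ring

theorem re_hd {f : ℝ → ℂ} {f' : ℂ} {x : ℝ} (h : HasDerivWithinAt f f' (Icc 0 1) x) :
    HasDerivWithinAt (fun x => (f x).re) f'.re (Icc 0 1) x := by
  have := (Complex.reCLM.hasFDerivAt (x := f x)).comp_hasDerivWithinAt x h
  exact this

namespace Fund

variable {V : ℝ → ℝ} (F : Fund V)

theorem S_conj (μ : ℝ) {x : ℝ} (hx : x ∈ Icc (0:ℝ) 1) : (starRingEnd ℂ) (F.S μ x) = F.S μ x := by
  have h := (F.hS μ).conj
  rw [Complex.conj_ofReal] at h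
  exact (h.unique (F.hS μ) F.hV zero_mem01 (by simp [F.S0]) (by simp [F.S'0]) hx).1

theorem S_re (μ : ℝ) {x : ℝ} (hx : x ∈ Icc (0:ℝ) 1) : ((F.S μ x).re : ℂ) = F.S μ x :=
  Complex.conj_eq_iff_re.1 (F.S_conj μ hx)

theorem S_ne (l : ℂ) : ∃ x ∈ Icc (0:ℝ) 1, F.S l x ≠ 0 := by
  by_contra hc
  push Not at hc
  have h1 := (F.hS l).d1 0 zero_mem01
  have h2 : HasDerivWithinAt (F.S l) 0 (Icc 0 1) 0 :=
    (hasDerivWithinAt_const (0:ℝ) (Icc (0:ℝ) 1) (0:ℂ)).congr (fun y hy => hc y hy) (hc 0 zero_mem01)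
  have := (uniq01 0 zero_mem01).eq_deriv _ h1 h2
  rw [F.S'0] at this
  exact one_ne_zero this

theorem S_sq_pos (l : ℂ) : 0 < ∫ x in (0:ℝ)..1, ‖F.S l x‖ ^ 2 := by
  obtain ⟨x, hx, hne⟩ := F.S_ne l
  refine intervalIntegral.integral_pos one_pos ((F.hS l).cont.norm.pow 2) (fun x _ => sq_nonneg _)
    ⟨x, hx, ?_⟩
  have := norm_pos_iff.2 hne
  positivity

theorem real_of_zero {l : ℂ} (hl : F.S l 1 = 0) : ∃ μ : ℝ, l = μ := by
  have h := (F.hS l).wronsk (F.hS l).conj zero_mem01 one_mem01 zero_le_one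
  simp only [hl, F.S0, map_zero, mul_zero, zero_mul, sub_zero] at h
  have h1 : ∫ x in (0:ℝ)..1, F.S l x * (starRingEnd ℂ) (F.S l x)
      = ((∫ x in (0:ℝ)..1, ‖F.S l x‖ ^ 2 : ℝ) : ℂ) := by
    rw [← intervalIntegral.integral_ofReal]
    congr 1; ext x
    rw [Complex.mul_conj, Complex.normSq_eq_norm_sq]
  rw [h1] at h
  have h2 := F.S_sq_pos l
  have h3 : l - (starRingEnd ℂ) l = 0 := by
    rcases mul_eq_zero.1 h.symm with h | h
    · exact h
    · exact absurd (by exact_mod_cast h) h2.ne'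
  exact ⟨l.re, (Complex.conj_eq_iff_re.1 (sub_eq_zero.1 h3).symm).symm⟩

theorem eigenpair_of_zero {μ : ℝ} (hl : F.S μ 1 = 0) :
    IsDirichletEigenpair V μ (fun x => (F.S μ x).re) := by
  have d1 : ∀ x ∈ Icc (0:ℝ) 1, HasDerivWithinAt (fun x => (F.S μ x).re) (F.S' μ x).re (Icc 0 1) x :=
    fun x hx => re_hd ((F.hS μ).d1 x hx)
  have d2 : ∀ x ∈ Icc (0:ℝ) 1, HasDerivWithinAt (fun x => (F.S' μ x).re) ((V x - μ) * (F.S μ x).re) (Icc 0 1) x := by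
    intro x hx
    refine (re_hd ((F.hS μ).d2 x hx)).congr_deriv ?_
    rw [← Complex.ofReal_sub, Complex.re_ofReal_mul]
  have e1 : EqOn (derivWithin (fun x => (F.S μ x).re) (Icc 0 1)) (fun x => (F.S' μ x).re) (Icc 0 1) :=
    fun x hx => (d1 x hx).derivWithin (uniq01 x hx)
  have e2 : EqOn (derivWithin (fun x => (F.S' μ x).re) (Icc 0 1)) (fun x => (V x - μ) * (F.S μ x).re) (Icc 0 1) :=
    fun x hx => (d2 x hx).derivWithin (uniq01 x hx)
  have hcS : ContinuousOn (fun x => (F.S μ x).re) (Icc 0 1) := fun x hx => (d1 x hx).continuousWithinAt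
  refine ⟨?_, ?_, ?_, by simp [F.S0], by simp [hl]⟩
  · have k1 : ContDiffOn ℝ 1 (fun x => (F.S' μ x).re) (Icc 0 1) := by
      rw [show (1 : WithTop ℕ∞) = 0 + 1 by norm_num, contDiffOn_succ_iff_derivWithin uniq01]
      refine ⟨fun x hx => (d2 x hx).differentiableWithinAt, by simp, ?_⟩
      rw [contDiffOn_zero]
      exact ((F.hV.sub continuousOn_const).mul hcS).congr e2
    rw [show (2 : WithTop ℕ∞) = 1 + 1 by norm_num, contDiffOn_succ_iff_derivWithin uniq01]
    exact ⟨fun x hx => (d1 x hx).differentiableWithinAt, by simp, k1.congr e1⟩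
  · obtain ⟨x, hx, hne⟩ := F.S_ne μ
    refine ⟨x, hx, ?_⟩
    rw [← F.S_re μ hx] at hne
    exact_mod_cast hne
  · intro x hx
    have hx' := Ioo_subset_Icc_self hx
    rw [derivWithin_congr e1 (e1 hx'), e2 hx']
    ring

theorem deriv_zero {μ : ℝ} (hl : F.S μ 1 = 0) :
    deriv (fun l => F.S l 1) μ * F.S' μ 1 = ((∫ x in (0:ℝ)..1, ‖F.S μ x‖ ^ 2 : ℝ) : ℂ) := by
  have h : ∀ l, F.S l 1 * F.S' μ 1 = (l - μ) * ∫ x in (0:ℝ)..1, F.S μ x * F.S l x := by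
    intro l
    have h := (F.hS l).wronsk (F.hS μ) zero_mem01 one_mem01 zero_le_one
    simp only [hl, F.S0, mul_zero, zero_mul, sub_zero] at h
    rw [h]
    congr 2; ext x; ring
  have hI := F.SI (F.S μ) (F.hS μ).cont 1 one_mem01
  have h1 : HasDerivAt (fun l => F.S l 1 * F.S' μ 1) (deriv (fun l => F.S l 1) μ * F.S' μ 1) μ :=
    ((F.Sd 1 one_mem01) μ).hasDerivAt.mul_const _
  have h2 := ((hasDerivAt_id (μ:ℂ)).sub_const (μ:ℂ)).mul (hI μ).hasDerivAt
  have h3 : (fun l => F.S l 1 * F.S' μ 1) = (fun l => id l - (μ:ℂ)) * fun l => ∫ x in (0:ℝ)..1, F.S μ x * F.S l x := by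
    ext l; exact h l
  rw [h3] at h1
  have := h1.unique h2
  rw [this]
  simp only [id, sub_self, zero_mul, add_zero, one_mul]
  rw [← intervalIntegral.integral_ofReal]
  refine intervalIntegral.integral_congr ?_
  intro x hx
  rw [uIcc_of_le zero_le_one] at hx
  simp only
  rw [← Complex.normSq_eq_norm_sq, Complex.normSq_eq_conj_mul_self, F.S_conj μ hx]

end Fund

/-- Bessel -/
theorem bessel (phi : ℕ → ℝ → ℝ) (hc : ∀ k, ContinuousOn (phi k) (Icc 0 1))
    (h1 : ∀ k, ∫ x in (0:ℝ)..1, (phi k x) ^ 2 = 1)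
    (h0 : ∀ j k, j ≠ k → ∫ x in (0:ℝ)..1, phi j x * phi k x = 0)
    (f : ℝ → ℝ) (hf : ContinuousOn f (Icc 0 1)) :
    Summable (fun k => (∫ x in (0:ℝ)..1, f x * phi k x) ^ 2) := by
  have ii : ∀ g : ℝ → ℝ, ContinuousOn g (Icc 0 1) → IntervalIntegrable g volume 0 1 := by
    intro g hg
    refine ContinuousOn.intervalIntegrable ?_
    rwa [uIcc_of_le zero_le_one]
  set c : ℕ → ℝ := fun k => ∫ x in (0:ℝ)..1, f x * phi k x with hcdef
  have key : ∀ n, ∃ r : ℝ → ℝ, ContinuousOn r (Icc 0 1) ∧ (∀ j, n ≤ j → ∫ x in (0:ℝ)..1, r x * phi j x = c j) ∧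
      ∫ x in (0:ℝ)..1, r x ^ 2 = (∫ x in (0:ℝ)..1, f x ^ 2) - ∑ k ∈ Finset.range n, c k ^ 2 := by
    intro n
    induction n with
    | zero => exact ⟨f, hf, fun j _ => rfl, by simp⟩
    | succ n ih =>
      obtain ⟨r, hr, hr1, hr2⟩ := ih
      refine ⟨fun x => r x - c n * phi n x, hr.sub (continuousOn_const.mul (hc n)), ?_, ?_⟩
      · intro j hj
        have : ∀ x, (r x - c n * phi n x) * phi j x = r x * phi j x - c n * (phi n x * phi j x) := by
          intro x; ring
        simp only [this]
        have i1 := ii (fun x => r x * phi j x) (hr.mul (hc j))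
        have i2 := ii (fun x => c n * (phi n x * phi j x)) (continuousOn_const.mul ((hc n).mul (hc j)))
        rw [intervalIntegral.integral_sub i1 i2, intervalIntegral.integral_const_mul,
          h0 n j (by omega), hr1 j (by omega)]
        ring
      · have : ∀ x, (r x - c n * phi n x) ^ 2 = r x ^ 2 - (2 * c n) * (r x * phi n x) + c n ^ 2 * (phi n x) ^ 2 := by
          intro x; ring
        simp only [this]
        have i1 := ii (fun x => r x ^ 2) (hr.pow 2)
        have i2 := ii (fun x => (2 * c n) * (r x * phi n x)) (continuousOn_const.mul (hr.mul (hc n)))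
        have i3 := ii (fun x => c n ^ 2 * (phi n x) ^ 2) (continuousOn_const.mul ((hc n).pow 2))
        rw [intervalIntegral.integral_add (i1.sub i2) i3, intervalIntegral.integral_sub i1 i2,
          intervalIntegral.integral_const_mul, intervalIntegral.integral_const_mul, h1 n, hr1 n le_rfl, hr2,
          Finset.sum_range_succ]
        ring
  refine summable_of_sum_range_le (c := ∫ x in (0:ℝ)..1, f x ^ 2) (fun k => sq_nonneg _) ?_
  intro n
  obtain ⟨r, -, -, hr2⟩ := key n
  have : 0 ≤ ∫ x in (0:ℝ)..1, r x ^ 2 :=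
    intervalIntegral.integral_nonneg zero_le_one (fun x _ => sq_nonneg _)
  linarith

theorem xexp_le {x t : ℝ} (ht : 0 < t) : x * Real.exp (-(x * t)) ≤ 1 / t := by
  have h1 := Real.add_one_le_exp (x * t)
  have h2 : Real.exp (x * t) * Real.exp (-(x * t)) = 1 := by rw [← Real.exp_add]; simp
  have h3 := Real.exp_pos (-(x * t))
  rw [le_div_iff₀ ht]
  nlinarith

theorem sys_facts {V : ℝ → ℝ} (F : Fund V) {lam : ℕ → ℝ} {phi : ℕ → ℝ → ℝ}
    (hsys : IsDirichletSystem V lam phi) (h : ℝ → ℝ) (hh : ContinuousOn h (Icc 0 1)) :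
    (∀ l, F.S l 1 = 0 → deriv (fun l => F.S l 1) l ≠ 0) ∧
    (∀ l, F.S l 1 = 0 → ∃ k, l = (lam k : ℂ)) ∧
    (∀ k, F.S (lam k) 1 = 0) ∧
    (∀ k, (((∫ x in (0:ℝ)..1, h x * phi k x) * derivWithin (phi k) (Icc 0 1) 1 : ℝ) : ℂ)
      * deriv (fun l => F.S l 1) (lam k) = ∫ x in (0:ℝ)..1, (h x : ℂ) * F.S (lam k) x) ∧
    (∀ t > 0, Summable (fun k => |(∫ x in (0:ℝ)..1, h x * phi k x) * derivWithin (phi k) (Icc 0 1) 1|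
      * Real.exp (-(lam k) * t))) := by
  obtain ⟨hmono, -, hpair, hnorm, hall⟩ := hsys
  set psi : ℕ → ℝ → ℝ := fun k => derivWithin (phi k) (Icc 0 1) with hpsi
  have hsol : ∀ k, IsSol V (lam k) (fun x => (phi k x : ℂ)) (fun x => (psi k x : ℂ)) :=
    fun k => eigen_sol F.hV (hpair k)
  have hp0 : ∀ k, phi k 0 = 0 := fun k => (hpair k).2.2.2.1
  have hp1 : ∀ k, phi k 1 = 0 := fun k => (hpair k).2.2.2.2
  have hpc : ∀ k, ContinuousOn (phi k) (Icc 0 1) := fun k => (hpair k).1.continuousOn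
  have hz : ∀ l, F.S l 1 = 0 → ∃ k, l = (lam k : ℂ) := by
    intro l hl
    obtain ⟨μ, rfl⟩ := F.real_of_zero hl
    obtain ⟨k, hk⟩ := hall μ _ (F.eigenpair_of_zero hl)
    exact ⟨k, by rw [hk]⟩
  have hkap : ∀ k, ∀ x ∈ Icc (0:ℝ) 1, (phi k x : ℂ) = psi k 0 * F.S (lam k) x ∧
      (psi k x : ℂ) = psi k 0 * F.S' (lam k) x := by
    intro k x hx
    have h1 := (F.hS (lam k)).lin (F.hC (lam k)) (psi k 0) 0
    have := (hsol k).unique h1 F.hV zero_mem01 (by simp [F.S0, hp0]) (by simp [F.S'0]) hx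
    simpa using this
  have hk0 : ∀ k, psi k 0 ≠ 0 := by
    intro k hk
    obtain ⟨x, hx, hne⟩ := (hpair k).2.1
    have := (hkap k x hx).1
    rw [hk] at this
    simp at this
    exact hne this
  have hD0 : ∀ k, F.S (lam k) 1 = 0 := by
    intro k
    have := (hkap k 1 one_mem01).1
    rw [hp1] at this
    simp only [Complex.ofReal_zero] at this
    exact (mul_eq_zero.1 this.symm).resolve_left (by exact_mod_cast hk0 k)
  have hder : ∀ l, F.S l 1 = 0 → deriv (fun l => F.S l 1) l ≠ 0 := by
    intro l hl h0
    obtain ⟨μ, rfl⟩ := F.real_of_zero hl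
    have := F.deriv_zero hl
    rw [h0, zero_mul] at this
    have h2 := F.S_sq_pos μ
    exact h2.ne (by exact_mod_cast this)
  refine ⟨hder, hz, hD0, ?_, ?_⟩
  · intro k
    have e1 : ((∫ x in (0:ℝ)..1, h x * phi k x : ℝ) : ℂ)
        = psi k 0 * ∫ x in (0:ℝ)..1, (h x : ℂ) * F.S (lam k) x := by
      rw [← intervalIntegral.integral_ofReal, ← intervalIntegral.integral_const_mul]
      refine intervalIntegral.integral_congr ?_
      intro x hx
      rw [uIcc_of_le zero_le_one] at hx
      simp only
      push_cast
      rw [(hkap k x hx).1]; ring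
    have e2 := (hkap k 1 one_mem01).2
    have e3 : ((psi k 0 : ℝ) : ℂ) ^ 2 * ((∫ x in (0:ℝ)..1, ‖F.S (lam k) x‖ ^ 2 : ℝ) : ℂ) = 1 := by
      rw [← Complex.ofReal_pow, ← Complex.ofReal_mul, ← intervalIntegral.integral_const_mul]
      rw [show ((1:ℂ)) = ((1:ℝ) : ℂ) by simp]
      refine congrArg (fun r : ℝ => (r : ℂ)) (Eq.trans ?_ (hnorm k))
      refine intervalIntegral.integral_congr ?_
      intro x hx
      rw [uIcc_of_le zero_le_one] at hx
      simp only
      have := congrArg (fun z : ℂ => ‖z‖ ^ 2) (hkap k x hx).1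
      simp only [norm_mul, Complex.norm_real, Real.norm_eq_abs, mul_pow, sq_abs] at this
      exact this.symm
    rw [← F.deriv_zero (hD0 k)] at e3
    push_cast
    rw [e1, e2]
    linear_combination (∫ x in (0:ℝ)..1, (h x : ℂ) * F.S (lam k) x) * e3
  · intro t ht
    have horth : ∀ j k, j ≠ k → ∫ x in (0:ℝ)..1, phi j x * phi k x = 0 := by
      intro j k hjk
      have := (hsol j).wronsk (hsol k) zero_mem01 one_mem01 zero_le_one
      simp only [hp0, hp1, Complex.ofReal_zero, mul_zero, zero_mul, sub_zero] at this
      rcases mul_eq_zero.1 this.symm with h1 | h1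
      · exact absurd (hmono.injective (by exact_mod_cast sub_eq_zero.1 h1)) hjk
      · simp only [← Complex.ofReal_mul] at h1
        rw [intervalIntegral.integral_ofReal] at h1
        exact_mod_cast h1
    set μ : ℝ := lam 0 - 1 with hμ
    have hlam : ∀ k, μ < lam k := by
      intro k
      have := hmono.monotone (Nat.zero_le k)
      linarith
    have hSμ : F.S μ 1 ≠ 0 := by
      intro h0
      obtain ⟨k, hk⟩ := hz _ h0
      exact (hlam k).ne (by exact_mod_cast hk)
    set s : ℝ → ℝ := fun x => (F.S μ x).re with hs
    have hsc : ContinuousOn s (Icc 0 1) := Complex.continuous_re.comp_continuousOn (F.hS μ).cont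
    have hs1 : s 1 ≠ 0 := by
      intro h0
      apply hSμ
      rw [← F.S_re μ one_mem01]
      exact_mod_cast h0
    set c : ℕ → ℝ := fun k => ∫ x in (0:ℝ)..1, h x * phi k x with hc
    set d : ℕ → ℝ := fun k => ∫ x in (0:ℝ)..1, s x * phi k x with hd
    have hcs : Summable (fun k => c k ^ 2) := bessel phi hpc hnorm horth h hh
    have hds : Summable (fun k => d k ^ 2) := bessel phi hpc hnorm horth s hsc
    have hrel : ∀ k, s 1 * psi k 1 = (μ - lam k) * d k := by
      intro k
      have := (F.hS μ).wronsk (hsol k) zero_mem01 one_mem01 zero_le_one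
      simp only [hp0, hp1, F.S0, Complex.ofReal_zero, mul_zero, zero_mul, sub_zero] at this
      have e : ∫ x in (0:ℝ)..1, F.S μ x * (phi k x : ℂ) = ((d k : ℝ) : ℂ) := by
        rw [hd, ← intervalIntegral.integral_ofReal]
        refine intervalIntegral.integral_congr ?_
        intro x hx
        rw [uIcc_of_le zero_le_one] at hx
        simp only [hs]
        rw [Complex.ofReal_mul, F.S_re μ hx]
      rw [e, ← F.S_re μ one_mem01] at this
      exact_mod_cast this
    have hbd : Summable (fun k => (Real.exp (-(μ * t)) / t / |s 1|) * (c k ^ 2 + d k ^ 2)) :=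
      (hcs.add hds).mul_left _
    refine hbd.of_nonneg_of_le (fun k => by positivity) ?_
    intro k
    have hsp : 0 < |s 1| := abs_pos.2 hs1
    have h1 : |psi k 1| = (lam k - μ) * |d k| / |s 1| := by
      rw [eq_div_iff hsp.ne', ← abs_mul, mul_comm, hrel k, abs_mul, abs_sub_comm,
        abs_of_pos (sub_pos.2 (hlam k))]
    have h2 : Real.exp (-(lam k) * t) = Real.exp (-(μ * t)) * Real.exp (-((lam k - μ) * t)) := by
      rw [← Real.exp_add]; congr 1; ring
    change |c k * psi k 1| * _ ≤ _
    rw [abs_mul, h1, h2]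
    have h3 := xexp_le (x := lam k - μ) ht
    have h4 : |c k| * |d k| ≤ c k ^ 2 + d k ^ 2 := by
      nlinarith [sq_nonneg (|c k| - |d k|), sq_abs (c k), sq_abs (d k), sq_nonneg (c k), sq_nonneg (d k)]
    calc _ = (Real.exp (-(μ * t)) * ((lam k - μ) * Real.exp (-((lam k - μ) * t))) / |s 1|) * (|c k| * |d k|) := by
          field_simp
      _ ≤ (Real.exp (-(μ * t)) * (1 / t) / |s 1|) * (c k ^ 2 + d k ^ 2) := by gcongr
      _ = _ := by ring

theorem tsum_ite_single {l a : ℕ → ℝ} (hl : StrictMono l) (k : ℕ) :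
    ∑' i, (if l i = l k then a i else 0) = a k := by
  rw [tsum_eq_single k]
  · simp
  · intro i hi
    rw [if_neg (fun h => hi (hl.injective h))]

theorem tsum_ite_none {l a : ℕ → ℝ} {ν : ℝ} (h : ∀ i, l i ≠ ν) :
    ∑' i, (if l i = ν then a i else 0) = 0 := by
  have : ∀ i, (if l i = ν then a i else 0) = 0 := fun i => if_neg (h i)
  simp [this]

namespace Fund
variable {V : ℝ → ℝ} (F : Fund V)

/-- the transform -/
noncomputable def Phi (h : ℝ → ℝ) (l : ℂ) : ℂ := ∫ x in (0:ℝ)..1, (h x : ℂ) * F.S l x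

theorem contC {h : ℝ → ℝ} (hh : ContinuousOn h (Icc 0 1)) : ContinuousOn (fun x => (h x : ℂ)) (Icc 0 1) :=
  Complex.continuous_ofReal.comp_continuousOn hh

theorem Phid {h : ℝ → ℝ} (hh : ContinuousOn h (Icc 0 1)) : Differentiable ℂ (F.Phi h) :=
  F.SI _ (contC hh) 1 one_mem01

theorem Phi_bound {h : ℝ → ℝ} (hh : ContinuousOn h (Icc 0 1)) {e : ℝ}
    (hs : ∀ x ∈ Icc (0:ℝ) 1, e < x → h x = 0) : ∃ M, 0 ≤ M ∧ ∀ z : ℂ, 1 ≤ ‖z‖ →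
    ‖F.Phi h (z ^ 2)‖ ≤ M * Real.exp (|z.im| * e) / ‖z‖ := by
  obtain ⟨K, hK0, hK⟩ := F.k_bound
  obtain ⟨H', hH'⟩ := isCompact_Icc.exists_bound_of_continuousOn (contC hh)
  have hH : ∀ x ∈ Icc (0:ℝ) 1, ‖(h x : ℂ)‖ ≤ max H' 0 := fun x hx => (hH' x hx).trans (le_max_left _ _)
  refine ⟨max H' 0 * K, mul_nonneg (le_max_right _ _) hK0.le, ?_⟩
  intro z hz
  exact F.int_bound hK0 hK (le_max_right _ _) hH one_mem01
    (fun x hx _ h2 => by simp [hs x hx h2]) z hz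

end Fund

theorem step0 {V₁ V₂ : ℝ → ℝ} (F₁ : Fund V₁) (F₂ : Fund V₂) {lam₁ lam₂ : ℕ → ℝ} {phi₁ phi₂ : ℕ → ℝ → ℝ}
    (hsys₁ : IsDirichletSystem V₁ lam₁ phi₁) (hsys₂ : IsDirichletSystem V₂ lam₂ phi₂)
    {h₁ h₂ : ℝ → ℝ} (hh₁ : ContinuousOn h₁ (Icc 0 1)) (hh₂ : ContinuousOn h₂ (Icc 0 1))
    {e : ℝ} (he : e < 1) (hs₁ : ∀ x ∈ Icc (0:ℝ) 1, e < x → h₁ x = 0)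
    (hs₂ : ∀ x ∈ Icc (0:ℝ) 1, e < x → h₂ x = 0)
    (t : ℕ → ℝ) (T1 : ℝ) (hT : 0 < T1) (hpos : ∀ m, 0 < t m) (hinj : Function.Injective t)
    (hlim : Tendsto t atTop (𝓝 T1))
    (hm : ∀ m, ∑' k, (∫ x in (0:ℝ)..1, h₁ x * phi₁ k x) * Real.exp (-(lam₁ k) * t m)
        * derivWithin (phi₁ k) (Icc 0 1) 1 = ∑' k, (∫ x in (0:ℝ)..1, h₂ x * phi₂ k x)
        * Real.exp (-(lam₂ k) * t m) * derivWithin (phi₂ k) (Icc 0 1) 1) :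
    ∀ l, F₁.Phi h₁ l * F₂.S l 1 = F₂.Phi h₂ l * F₁.S l 1 := by
  obtain ⟨A1, B1, C1, E1, S1⟩ := sys_facts F₁ hsys₁ h₁ hh₁
  obtain ⟨A2, B2, C2, E2, S2⟩ := sys_facts F₂ hsys₂ h₂ hh₂
  set a₁ : ℕ → ℝ := fun k => (∫ x in (0:ℝ)..1, h₁ x * phi₁ k x) * derivWithin (phi₁ k) (Icc 0 1) 1 with ha₁
  set a₂ : ℕ → ℝ := fun k => (∫ x in (0:ℝ)..1, h₂ x * phi₂ k x) * derivWithin (phi₂ k) (Icc 0 1) 1 with ha₂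
  have hcoef := dirichlet_unique_two a₁ a₂ lam₁ lam₂ hsys₁.1 hsys₂.1 S1 S2 t T1 hT hpos hinj hlim (by
    intro m
    have := hm m
    convert this using 3
    · simp only [ha₁]; ring
    · simp only [ha₂]; ring)
  have E1' : ∀ k, (a₁ k : ℂ) * deriv (fun l => F₁.S l 1) (lam₁ k) = F₁.Phi h₁ (lam₁ k) := E1
  have E2' : ∀ k, (a₂ k : ℂ) * deriv (fun l => F₂.S l 1) (lam₂ k) = F₂.Phi h₂ (lam₂ k) := E2
  have P1d := F₁.Phid hh₁
  have P2d := F₂.Phid hh₂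
  have D1d := F₁.Sd 1 one_mem01
  have D2d := F₂.Sd 1 one_mem01
  set N : ℂ → ℂ := fun l => F₁.Phi h₁ l * F₂.S l 1 - F₂.Phi h₂ l * F₁.S l 1 with hN
  have hNd : Differentiable ℂ N := (P1d.mul D2d).sub (P2d.mul D1d)
  have z1 : ∀ l, F₁.S l 1 = 0 → F₂.S l 1 ≠ 0 → F₁.Phi h₁ l = 0 := by
    intro l hl hl2
    obtain ⟨k, rfl⟩ := B1 l hl
    have := hcoef (lam₁ k)
    rw [tsum_ite_single hsys₁.1, tsum_ite_none] at this
    · rw [← E1', this]; simp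
    · intro i hi
      apply hl2
      rw [← hi]; exact C2 i
  have z2 : ∀ l, F₂.S l 1 = 0 → F₁.S l 1 ≠ 0 → F₂.Phi h₂ l = 0 := by
    intro l hl hl2
    obtain ⟨k, rfl⟩ := B2 l hl
    have := hcoef (lam₂ k)
    rw [tsum_ite_single hsys₂.1, tsum_ite_none] at this
    · rw [← E2', ← this]; simp
    · intro i hi
      apply hl2
      rw [← hi]; exact C1 i
  have z3 : ∀ l, F₁.S l 1 = 0 → F₂.S l 1 = 0 →
      F₁.Phi h₁ l * deriv (fun l => F₂.S l 1) l = F₂.Phi h₂ l * deriv (fun l => F₁.S l 1) l := by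
    intro l hl hl2
    obtain ⟨k, rfl⟩ := B1 l hl
    obtain ⟨j, hj⟩ := B2 _ hl2
    have hj' : lam₁ k = lam₂ j := by exact_mod_cast hj
    have := hcoef (lam₁ k)
    rw [tsum_ite_single hsys₁.1, hj', tsum_ite_single hsys₂.1] at this
    rw [← E1', this, hj', ← E2']
    ring
  obtain ⟨N1, hN1d, hN1, hN1z⟩ := entire_div N (fun l => F₁.S l 1) _ hNd (fun z => (D1d z).hasDerivAt) A1 (by
    intro l hl
    simp only [hN, hl, mul_zero, sub_zero]
    by_cases h2 : F₂.S l 1 = 0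
    · rw [h2, mul_zero]
    · rw [z1 l hl h2, zero_mul])
  obtain ⟨E, hEd, hE, -⟩ := entire_div N1 (fun l => F₂.S l 1) _ hN1d (fun z => (D2d z).hasDerivAt) A2 (by
    intro l hl
    by_cases h1 : F₁.S l 1 = 0
    · rw [hN1z l h1]
      have : deriv N l = 0 := by
        have hd := ((P1d l).hasDerivAt.mul (D2d l).hasDerivAt).sub ((P2d l).hasDerivAt.mul (D1d l).hasDerivAt)
        have hd' : HasDerivAt N _ l := hd
        rw [hd'.deriv, hl, h1]
        linear_combination z3 l h1 hl
      rw [this, zero_div]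
    · have := hN1 l
      simp only [hN, hl, z2 l hl h1, mul_zero, zero_mul, sub_zero] at this
      exact (mul_eq_zero.1 this.symm).resolve_right h1)
  have hNE : ∀ l, F₁.Phi h₁ l * F₂.S l 1 - F₂.Phi h₂ l * F₁.S l 1 = E l * F₂.S l 1 * F₁.S l 1 := by
    intro l
    rw [← hE l]; exact hN1 l
  obtain ⟨M1, hM10, hM1⟩ := F₁.Phi_bound hh₁ hs₁
  obtain ⟨M2, hM20, hM2⟩ := F₂.Phi_bound hh₂ hs₂
  have hE0 : ∀ l, E l = 0 := by
    refine liou_exp E hEd one_pos (sub_pos.2 he) (8 * M1 + 8 * M2) (by positivity) ?_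
    filter_upwards [F₁.S_lower one_pos le_rfl, F₂.S_lower one_pos le_rfl] with n hn1 hn2 z hz
    obtain ⟨hz1, hl1⟩ := hn1 z hz
    obtain ⟨-, hl2⟩ := hn2 z hz
    have b1 := hM1 z hz1
    have b2 := hM2 z hz1
    have hzp : 0 < ‖z‖ := by linarith
    rw [mul_one] at hl1 hl2
    have hp : 0 < Real.exp |z.im| / (8 * ‖z‖) := by positivity
    have hD1 : 0 < ‖F₁.S (z ^ 2) 1‖ := hp.trans_le hl1
    have hD2 : 0 < ‖F₂.S (z ^ 2) 1‖ := hp.trans_le hl2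
    have hEeq : E (z ^ 2) = F₁.Phi h₁ (z ^ 2) / F₁.S (z ^ 2) 1 - F₂.Phi h₂ (z ^ 2) / F₂.S (z ^ 2) 1 := by
      have n1 := norm_pos_iff.1 hD1
      have n2 := norm_pos_iff.1 hD2
      field_simp
      linear_combination -(hNE (z ^ 2))
    have hexp : Real.exp (|z.im| * e) = Real.exp |z.im| * Real.exp (-((1 - e) * |z.im|)) := by
      rw [← Real.exp_add]; congr 1; ring
    have q : ∀ M x y : ℝ, 0 ≤ M → x ≤ M * Real.exp (|z.im| * e) / ‖z‖ → Real.exp |z.im| / (8 * ‖z‖) ≤ y →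
        x / y ≤ 8 * M * Real.exp (-((1 - e) * |z.im|)) := by
      intro M x y hM hx hy
      rw [div_le_iff₀ (hp.trans_le hy)]
      calc x ≤ _ := hx
        _ = 8 * M * Real.exp (-((1 - e) * |z.im|)) * (Real.exp |z.im| / (8 * ‖z‖)) := by
            rw [hexp]; field_simp
        _ ≤ _ := by gcongr
    rw [hEeq]
    refine (norm_sub_le _ _).trans ?_
    rw [norm_div, norm_div]
    have := q M1 _ _ hM10 b1 hl1
    have := q M2 _ _ hM20 b2 hl2
    linarith
  intro l
  have := hNE l
  rw [hE0 l] at this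
  linear_combination this

/-- Wronskian constancy where the two potentials agree. -/
theorem wr_agree {V₁ V₂ : ℝ → ℝ} {l : ℂ} {y y' v v' : ℝ → ℂ} (h : IsSol V₁ l y y') (h2 : IsSol V₂ l v v')
    {a : ℝ} (ha : a ∈ Icc (0:ℝ) 1) (hV : ∀ x ∈ Ioo a 1, V₁ x = V₂ x) :
    y 1 * v' 1 - y' 1 * v 1 = y a * v' a - y' a * v a := by
  have hc : ContinuousOn (fun x => y x * v' x - y' x * v x) (Icc a 1) :=
    ((h.cont.mul h2.cont').sub (h.cont'.mul h2.cont)).mono (Icc_subset_Icc ha.1 le_rfl)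
  have hd : ∀ x ∈ Ioo a 1, HasDerivAt (fun x => y x * v' x - y' x * v x) 0 x := by
    intro x hx
    have hx' : x ∈ Ioo (0:ℝ) 1 := ⟨ha.1.trans_lt hx.1, hx.2⟩
    refine (((h.hd1 hx').mul (h2.hd2 hx')).sub ((h.hd2 hx').mul (h2.hd1 hx'))).congr_deriv ?_
    rw [hV x hx]; ring
  have := intervalIntegral.integral_eq_sub_of_hasDerivAt_of_le ha.2 hc hd (by simp)
  simp only [intervalIntegral.integral_zero] at this
  exact (sub_eq_zero.1 this.symm)

theorem S_at_one {V₁ V₂ : ℝ → ℝ} (F₁ : Fund V₁) (F₂ : Fund V₂) {a : ℝ} (ha : a ∈ Icc (0:ℝ) 1)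
    (hV : ∀ x ∈ Ioo a 1, V₂ x = V₁ x) (l : ℂ) :
    F₂.S l 1 = F₁.c l 1 a * F₂.S l a + F₁.k l 1 a * F₂.S' l a := by
  have h1 := wr_agree (F₂.hS l) (F₁.ksol l a) ha hV
  have h2 := wr_agree (F₂.hS l) (F₁.csol l a) ha hV
  simp only [F₁.k_self, F₁.k'_self l ha, F₁.c'_self, F₁.c_self l ha] at h1 h2
  have h3 := F₁.ck_wr l one_mem01 ha
  linear_combination (F₁.c l 1 a) * h1 - F₁.k l 1 a * h2 - F₂.S l 1 * h3

theorem S_from_a {V : ℝ → ℝ} (F : Fund V) {a x : ℝ} (ha : a ∈ Icc (0:ℝ) 1) (hx : x ∈ Icc (0:ℝ) 1)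
    (l : ℂ) : F.S l x = F.S l a * F.c l x a + F.S' l a * F.k l x a := by
  refine ((F.hS l).unique ((F.csol l a).lin (F.ksol l a) (F.S l a) (F.S' l a)) F.hV ha ?_ ?_ hx).1
  · simp [F.c_self l ha, F.k_self]
  · simp [F.c'_self, F.k'_self l ha]

theorem step1 {V₁ V₂ : ℝ → ℝ} (F₁ : Fund V₁) (F₂ : Fund V₂) {h₁ h₂ : ℝ → ℝ}
    (hh₁ : ContinuousOn h₁ (Icc 0 1)) (hh₂ : ContinuousOn h₂ (Icc 0 1))
    (hne : ∃ x ∈ Icc (0:ℝ) 1, h₁ x ≠ 0)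
    {e a : ℝ} (he : 0 < e) (ha : 0 < a) (hea : a = 1 / 2 - e)
    (hs₁ : ∀ x ∈ Icc (0:ℝ) 1, e < x → h₁ x = 0)
    (hs₂ : ∀ x ∈ Icc (0:ℝ) 1, e < x → h₂ x = 0)
    (hV : ∀ x ∈ Ioo a 1, V₂ x = V₁ x)
    (h0 : ∀ l, F₁.Phi h₁ l * F₂.S l 1 = F₂.Phi h₂ l * F₁.S l 1) :
    ∀ l, F₂.S l a * F₁.S' l a = F₂.S' l a * F₁.S l a := by
  have ham : a ∈ Icc (0:ℝ) 1 := ⟨ha.le, by linarith⟩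
  set P : ℂ → ℂ := fun l => F₁.Phi h₁ l * F₂.S l a - F₂.Phi h₂ l * F₁.S l a with hP
  set Q : ℂ → ℂ := fun l => F₁.Phi h₁ l * F₂.S' l a - F₂.Phi h₂ l * F₁.S' l a with hQ
  have dP : Differentiable ℂ P :=
    ((F₁.Phid hh₁).mul (F₂.Sd a ham)).sub ((F₂.Phid hh₂).mul (F₁.Sd a ham))
  have dQ : Differentiable ℂ Q :=
    ((F₁.Phid hh₁).mul (F₂.S'd a ham)).sub ((F₂.Phid hh₂).mul (F₁.S'd a ham))
  have hPQ : ∀ l, F₁.c l 1 a * P l + F₁.k l 1 a * Q l = 0 := by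
    intro l
    have := h0 l
    rw [S_at_one F₁ F₂ ham hV l, S_at_one F₁ F₁ ham (fun _ _ => rfl) l] at this
    simp only [hP, hQ]
    linear_combination this
  set G : ℂ → ℂ := fun l => F₁.c' l 1 a * P l + F₁.k' l 1 a * Q l with hG
  have dG : Differentiable ℂ G :=
    ((F₁.c'd one_mem01 ham).mul dP).add ((F₁.k'd one_mem01 ham).mul dQ)
  have hGP : ∀ l, F₁.k l 1 a * G l = - P l := by
    intro l
    have := F₁.ck_wr l one_mem01 ham
    simp only [hG]
    linear_combination F₁.k' l 1 a * hPQ l - P l * this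
  have hGQ : ∀ l, F₁.c l 1 a * G l = Q l := by
    intro l
    have := F₁.ck_wr l one_mem01 ham
    simp only [hG]
    linear_combination F₁.c' l 1 a * hPQ l + Q l * this
  obtain ⟨M1, hM10, hM1⟩ := F₁.Phi_bound hh₁ hs₁
  obtain ⟨M2, hM20, hM2⟩ := F₂.Phi_bound hh₂ hs₂
  obtain ⟨K1, hK10, hK1⟩ := F₁.k_bound
  obtain ⟨K2, hK20, hK2⟩ := F₂.k_bound
  have hL : 0 < 1 - a := by linarith
  have hG0 : ∀ l, G l = 0 := by
    refine liou_inv G dG hL (8 * (M1 * K2 + M2 * K1)) ?_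
    filter_upwards [F₁.k_lower hL ha.le (by linarith)] with n hn z hz
    obtain ⟨hz1, hlow⟩ := hn z hz
    rw [add_sub_cancel] at hlow
    have hzp : 0 < ‖z‖ := by linarith
    have e1 : Real.exp (|z.im| * e) * Real.exp (|z.im| * a) ≤ Real.exp (|z.im| * (1 - a)) := by
      rw [← Real.exp_add, Real.exp_le_exp]
      nlinarith [abs_nonneg z.im]
    have hPb : ‖P (z ^ 2)‖ ≤ (M1 * K2 + M2 * K1) * Real.exp (|z.im| * (1 - a)) / ‖z‖ ^ 2 := by
      have i1 : ‖F₁.Phi h₁ (z ^ 2) * F₂.S (z ^ 2) a‖ ≤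
          (M1 * Real.exp (|z.im| * e) / ‖z‖) * (K2 * Real.exp (|z.im| * a) / ‖z‖) := by
        rw [norm_mul]
        exact mul_le_mul (hM1 z hz1) (F₂.S_bound hK2 z a hz1 ham) (norm_nonneg _) (by positivity)
      have i2 : ‖F₂.Phi h₂ (z ^ 2) * F₁.S (z ^ 2) a‖ ≤
          (M2 * Real.exp (|z.im| * e) / ‖z‖) * (K1 * Real.exp (|z.im| * a) / ‖z‖) := by
        rw [norm_mul]
        exact mul_le_mul (hM2 z hz1) (F₁.S_bound hK1 z a hz1 ham) (norm_nonneg _) (by positivity)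
      calc ‖P (z ^ 2)‖ ≤ _ := norm_sub_le _ _
        _ ≤ _ := add_le_add i1 i2
        _ = (M1 * K2 + M2 * K1) * (Real.exp (|z.im| * e) * Real.exp (|z.im| * a)) / ‖z‖ ^ 2 := by
            field_simp
        _ ≤ _ := by gcongr
    have h3 : ‖F₁.k (z ^ 2) 1 a‖ * ‖G (z ^ 2)‖ = ‖P (z ^ 2)‖ := by
      rw [← norm_mul, hGP, norm_neg]
    have h4 : Real.exp (|z.im| * (1 - a)) / (8 * ‖z‖) * ‖G (z ^ 2)‖ ≤
        Real.exp (|z.im| * (1 - a)) / (8 * ‖z‖) * (8 * (M1 * K2 + M2 * K1) / ‖z‖) := by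
      calc _ ≤ ‖F₁.k (z ^ 2) 1 a‖ * ‖G (z ^ 2)‖ := by gcongr
        _ ≤ _ := h3.trans_le hPb
        _ = _ := by field_simp
    exact le_of_mul_le_mul_left h4 (by positivity)
  have hne' : ∃ l, F₁.Phi h₁ l ≠ 0 := by
    by_contra hc
    push Not at hc
    obtain ⟨x, hx, hxn⟩ := hne
    have := F₁.complete (Fund.contC hh₁) hc x hx
    exact hxn (by exact_mod_cast this)
  obtain ⟨l0, hl0⟩ := hne'
  have := entire_mul_zero (F₁.Phi h₁) (fun l => F₂.S l a * F₁.S' l a - F₂.S' l a * F₁.S l a)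
    (F₁.Phid hh₁) (((F₂.Sd a ham).mul (F₁.S'd a ham)).sub ((F₂.S'd a ham).mul (F₁.Sd a ham))) (by
      intro l
      have p0 : P l = 0 := by have := hGP l; rw [hG0, mul_zero] at this; exact neg_eq_zero.1 this.symm
      have q0 : Q l = 0 := by rw [← hGQ, hG0, mul_zero]
      simp only [hP, hQ] at p0 q0
      linear_combination F₁.S' l a * p0 - F₁.S l a * q0) hl0
  intro l
  exact sub_eq_zero.1 (this l)

theorem step2 {V₁ V₂ : ℝ → ℝ} (F₁ : Fund V₁) (F₂ : Fund V₂) {a : ℝ} (ha : 0 < a) (ha1 : a ≤ 1)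
    (h : ∀ l, F₂.S l a * F₁.S' l a = F₂.S' l a * F₁.S l a) {x : ℝ} (hx : x ∈ Icc 0 a) :
    ∀ l, F₁.c l x a * F₂.k l x a = F₂.c l x a * F₁.k l x a := by
  have ham : a ∈ Icc (0:ℝ) 1 := ⟨ha.le, ha1⟩
  have hxm : x ∈ Icc (0:ℝ) 1 := ⟨hx.1, hx.2.trans ha1⟩
  set Δ : ℂ → ℂ := fun l => F₁.c l x a * F₂.k l x a - F₂.c l x a * F₁.k l x a with hΔ
  have dΔ : Differentiable ℂ Δ :=
    ((F₁.cd hxm ham).mul (F₂.kd hxm ham)).sub ((F₂.cd hxm ham).mul (F₁.kd hxm ham))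
  have key : ∀ l, F₁.S l a * F₂.S l a * Δ l =
      F₂.S l a * (F₁.S l x * F₂.k l x a) - F₁.S l a * (F₂.S l x * F₁.k l x a) := by
    intro l
    rw [S_from_a F₁ ham hxm l, S_from_a F₂ ham hxm l]
    simp only [hΔ]
    linear_combination -F₁.k l x a * F₂.k l x a * h l
  obtain ⟨K1, hK10, hK1⟩ := F₁.k_bound
  obtain ⟨K2, hK20, hK2⟩ := F₂.k_bound
  have : ∀ l, Δ l = 0 := by
    refine liou_inv Δ dΔ ha (8 * (K1 * K2) + 8 * (K2 * K1)) ?_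
    filter_upwards [F₁.S_lower ha ha1, F₂.S_lower ha ha1] with n hn1 hn2 z hz
    obtain ⟨hz1, hl1⟩ := hn1 z hz
    obtain ⟨-, hl2⟩ := hn2 z hz
    have hzp : 0 < ‖z‖ := by linarith
    have hp : 0 < Real.exp (|z.im| * a) / (8 * ‖z‖) := by positivity
    have n1 := norm_pos_iff.1 (hp.trans_le hl1)
    have n2 := norm_pos_iff.1 (hp.trans_le hl2)
    have hD : Δ (z ^ 2) = (F₁.S (z ^ 2) x * F₂.k (z ^ 2) x a) / F₁.S (z ^ 2) a -
        (F₂.S (z ^ 2) x * F₁.k (z ^ 2) x a) / F₂.S (z ^ 2) a := by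
      field_simp
      linear_combination key (z ^ 2)
    have hax : |x - a| = a - x := by rw [abs_sub_comm, abs_of_nonneg]; linarith [hx.2]
    have q : ∀ (A B s k : ℝ) (y : ℝ), 0 < A → 0 < B → 0 ≤ k →
        s ≤ A * Real.exp (|z.im| * x) / ‖z‖ → k ≤ B * Real.exp (|z.im| * |x - a|) / ‖z‖ →
        Real.exp (|z.im| * a) / (8 * ‖z‖) ≤ y → s * k / y ≤ 8 * (A * B) / ‖z‖ := by
      intro A B s k y hA hB hk hs' hk' hy
      rw [div_le_iff₀ (hp.trans_le hy)]
      have ee : Real.exp (|z.im| * x) * Real.exp (|z.im| * |x - a|) = Real.exp (|z.im| * a) := by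
        rw [← Real.exp_add, hax]; congr 1; ring
      calc s * k ≤ (A * Real.exp (|z.im| * x) / ‖z‖) * (B * Real.exp (|z.im| * |x - a|) / ‖z‖) :=
            mul_le_mul hs' hk' hk (by positivity)
        _ = 8 * (A * B) / ‖z‖ * (Real.exp (|z.im| * a) / (8 * ‖z‖)) := by
            rw [← ee]; field_simp
        _ ≤ _ := by gcongr
    rw [hD, add_div]
    refine (norm_sub_le _ _).trans ?_
    rw [norm_div, norm_div, norm_mul, norm_mul]
    exact add_le_add
      (q K1 K2 _ _ _ hK10 hK20 (norm_nonneg _) (F₁.S_bound hK1 z x hz1 hxm) (hK2 z x a hz1 hxm ham) hl1)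
      (q K2 K1 _ _ _ hK20 hK10 (norm_nonneg _) (F₂.S_bound hK2 z x hz1 hxm) (hK1 z x a hz1 hxm ham) hl2)
  intro l
  exact sub_eq_zero.1 (this l)

theorem sq_pot {V₁ V₂ : ℝ → ℝ} {l : ℂ} {y y' v v' : ℝ → ℂ} (h : IsSol V₁ l y y') (h2 : IsSol V₂ l v v')
    {a : ℝ} (ha1 : a ≤ 1) (hsq : ∀ x ∈ Ioo 0 a, y x ^ 2 = v x ^ 2) {x : ℝ} (hx : x ∈ Ioo 0 a)
    (hne : y x ≠ 0) : V₁ x = V₂ x := by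
  have hm : ∀ x ∈ Ioo 0 a, x ∈ Ioo (0:ℝ) 1 := fun x hx => ⟨hx.1, hx.2.trans_le ha1⟩
  have e1 : ∀ x ∈ Ioo 0 a, y x * y' x = v x * v' x := by
    intro x hx
    have d1 := (h.hd1 (hm x hx)).mul (h.hd1 (hm x hx))
    have d2 := (h2.hd1 (hm x hx)).mul (h2.hd1 (hm x hx))
    have d3 : HasDerivAt (y * y) _ x := d2.congr_of_eventuallyEq (by
      filter_upwards [isOpen_Ioo.mem_nhds hx] with s hs
      have := hsq s hs
      simp only [Pi.mul_apply]
      linear_combination this)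
    have := d1.unique d3
    linear_combination this / 2
  have e2 : y' x * y' x + y x * (((V₁ x : ℂ) - l) * y x) = v' x * v' x + v x * (((V₂ x : ℂ) - l) * v x) := by
    have d1 := (h.hd1 (hm x hx)).mul (h.hd2 (hm x hx))
    have d2 := (h2.hd1 (hm x hx)).mul (h2.hd2 (hm x hx))
    have d3 : HasDerivAt (y * y') _ x := d2.congr_of_eventuallyEq (by
      filter_upwards [isOpen_Ioo.mem_nhds hx] with s hs
      exact e1 s hs)
    exact d1.unique d3
  have e0 := hsq x hx
  have e1 := e1 x hx
  have e3 : y x ^ 2 * (y' x ^ 2 - v' x ^ 2) = 0 := by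
    linear_combination (y x * y' x + v x * v' x) * e1 - v' x ^ 2 * e0
  have e4 := (mul_eq_zero.1 e3).resolve_left (pow_ne_zero 2 hne)
  have e5 : y x ^ 2 * ((V₁ x : ℂ) - V₂ x) = 0 := by
    linear_combination e2 - e4 - ((V₂ x : ℂ) - l) * e0
  have e6 := sub_eq_zero.1 ((mul_eq_zero.1 e5).resolve_left (pow_ne_zero 2 hne))
  exact_mod_cast e6

theorem step3 {V₁ V₂ : ℝ → ℝ} (F₁ : Fund V₁) (F₂ : Fund V₂) {a : ℝ} (ha : 0 < a) (ha1 : a ≤ 1)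
    (h : ∀ x ∈ Ioo 0 a, F₁.c 0 x a * F₂.k 0 x a = F₂.c 0 x a * F₁.k 0 x a) :
    ∀ x ∈ Ioo 0 a, V₁ x = V₂ x := by
  have ham : a ∈ Icc (0:ℝ) 1 := ⟨ha.le, ha1⟩
  have hm : ∀ x ∈ Ioo 0 a, x ∈ Ioo (0:ℝ) 1 := fun x hx => ⟨hx.1, hx.2.trans_le ha1⟩
  have e1 : ∀ x ∈ Ioo 0 a, F₁.c' 0 x a * F₂.k 0 x a + F₁.c 0 x a * F₂.k' 0 x a
      = F₂.c' 0 x a * F₁.k 0 x a + F₂.c 0 x a * F₁.k' 0 x a := by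
    intro x hx
    have d1 := ((F₁.csol 0 a).hd1 (hm x hx)).mul ((F₂.ksol 0 a).hd1 (hm x hx))
    have d2 := ((F₂.csol 0 a).hd1 (hm x hx)).mul ((F₁.ksol 0 a).hd1 (hm x hx))
    have d3 := d2.congr_of_eventuallyEq (f₁ := (fun x => F₁.c 0 x a) * (fun x => F₂.k 0 x a)) (by
      filter_upwards [isOpen_Ioo.mem_nhds hx] with s hs
      exact h s hs)
    exact d1.unique d3
  have hc : ∀ x ∈ Ioo 0 a, (F₁.c 0 x a) ^ 2 = (F₂.c 0 x a) ^ 2 := by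
    intro x hx
    have w1 := F₁.ck_wr 0 (Ioo_subset_Icc_self (hm x hx)) ham
    have w2 := F₂.ck_wr 0 (Ioo_subset_Icc_self (hm x hx)) ham
    linear_combination F₁.c 0 x a * F₂.c 0 x a * e1 x hx - (F₁.c 0 x a) ^ 2 * w2 + (F₂.c 0 x a) ^ 2 * w1
      - (F₂.c 0 x a * F₁.c' 0 x a + F₁.c 0 x a * F₂.c' 0 x a) * h x hx
  have hk : ∀ x ∈ Ioo 0 a, (F₁.k 0 x a) ^ 2 = (F₂.k 0 x a) ^ 2 := by
    intro x hx
    have w1 := F₁.ck_wr 0 (Ioo_subset_Icc_self (hm x hx)) ham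
    have w2 := F₂.ck_wr 0 (Ioo_subset_Icc_self (hm x hx)) ham
    linear_combination F₁.k 0 x a * F₂.k 0 x a * e1 x hx - (F₁.k 0 x a) ^ 2 * w2 + (F₂.k 0 x a) ^ 2 * w1
      - (F₁.k 0 x a * F₂.k' 0 x a + F₂.k 0 x a * F₁.k' 0 x a) * h x hx
  intro x hx
  by_cases h0 : F₁.c 0 x a = 0
  · have h1 : F₁.k 0 x a ≠ 0 := by
      intro h1
      have := F₁.ck_wr 0 (Ioo_subset_Icc_self (hm x hx)) ham
      rw [h0, h1] at this
      simp at this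
    exact sq_pot (F₁.ksol 0 a) (F₂.ksol 0 a) ha1 hk hx h1
  · exact sq_pot (F₁.csol 0 a) (F₂.csol 0 a) ha1 hc hx h0

theorem pot_cont {b : ℝ → ℝ} (hb : ContDiffOn ℝ 1 b (Icc 0 1)) : ContinuousOn (potentialOf b) (Icc 0 1) := by
  have h1 : ContinuousOn (derivWithin b (Icc 0 1)) (Icc 0 1) := hb.continuousOn_derivWithin uniq01 le_rfl
  exact (h1.neg.div_const 2).add ((hb.continuousOn.pow 2).div_const 4)

theorem prim_cont {b : ℝ → ℝ} (hb : ContinuousOn b (Icc 0 1)) {a : ℝ} (ha : a ∈ Icc (0:ℝ) 1) :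
    ContinuousOn (fun x => ∫ s in a..x, b s) (Icc 0 1) := by
  have hi : IntervalIntegrable b volume 0 1 := by
    refine ContinuousOn.intervalIntegrable ?_
    rwa [uIcc_of_le zero_le_one]
  have := intervalIntegral.continuousOn_primitive_interval' hi (a := a) (by rwa [uIcc_of_le zero_le_one])
  rwa [uIcc_of_le zero_le_one] at this

theorem gauged_cont {b g : ℝ → ℝ} (hb : ContinuousOn b (Icc 0 1)) (hg : ContinuousOn g (Icc 0 1)) :
    ContinuousOn (gaugedDatum b g) (Icc 0 1) :=
  (Real.continuous_exp.comp_continuousOn (continuousOn_const.mul (prim_cont hb one_mem01))).mul hg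

theorem b_unique {b₁ b₂ : ℝ → ℝ} (hb₁ : ContDiffOn ℝ 1 b₁ (Icc 0 1)) (hb₂ : ContDiffOn ℝ 1 b₂ (Icc 0 1))
    (hV : ∀ x ∈ Icc (0:ℝ) 1, potentialOf b₁ x = potentialOf b₂ x) (h1 : b₁ 1 = b₂ 1) :
    EqOn b₁ b₂ (Icc 0 1) := by
  set f : ℝ → ℝ := fun x => (b₁ x + b₂ x) / 2 with hf
  have hfc : ContinuousOn f (Icc 0 1) := (hb₁.continuousOn.add hb₂.continuousOn).div_const 2
  set J : ℝ → ℝ := fun x => ∫ s in (0:ℝ)..x, f s with hJ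
  have hJc : ContinuousOn J (Icc 0 1) := prim_cont hfc zero_mem01
  have hJd : ∀ x ∈ Ioo (0:ℝ) 1, HasDerivAt J (f x) x := by
    intro x hx
    refine intervalIntegral.integral_hasDerivAt_right ?_ ?_ ?_
    · refine ContinuousOn.intervalIntegrable ?_
      rw [uIcc_of_le hx.1.le]
      exact hfc.mono (Icc_subset_Icc le_rfl hx.2.le)
    · exact (hfc.mono Ioo_subset_Icc_self).stronglyMeasurableAtFilter isOpen_Ioo x hx
    · exact hfc.continuousAt (Icc_mem_nhds hx.1 hx.2)
  have hbd : ∀ b : ℝ → ℝ, ContDiffOn ℝ 1 b (Icc 0 1) → ∀ x ∈ Ioo (0:ℝ) 1,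
      HasDerivAt b (derivWithin b (Icc 0 1) x) x := by
    intro b hb x hx
    exact ((hb.differentiableOn (by norm_num)) x (Ioo_subset_Icc_self hx)).hasDerivWithinAt.hasDerivAt
      (Icc_mem_nhds hx.1 hx.2)
  set W : ℝ → ℝ := fun x => (b₁ x - b₂ x) * Real.exp (-J x) with hW
  have hWc : ContinuousOn W (Icc 0 1) :=
    (hb₁.continuousOn.sub hb₂.continuousOn).mul (Real.continuous_exp.comp_continuousOn hJc.neg)
  have hWd : ∀ x ∈ Ioo (0:ℝ) 1, HasDerivAt W 0 x := by
    intro x hx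
    refine (((hbd b₁ hb₁ x hx).sub (hbd b₂ hb₂ x hx)).mul (hJd x hx).neg.exp).congr_deriv ?_
    have := hV x (Ioo_subset_Icc_self hx)
    simp only [potentialOf] at this
    simp only [hf, Pi.sub_apply, Pi.neg_apply]
    linear_combination -2 * Real.exp (-J x) * this
  intro x hx
  have := intervalIntegral.integral_eq_sub_of_hasDerivAt_of_le hx.2
    (hWc.mono (Icc_subset_Icc hx.1 le_rfl)) (fun s hs => hWd s ⟨hx.1.trans_lt hs.1, hs.2⟩) (by simp)
  simp only [intervalIntegral.integral_zero, hW, h1, sub_self, zero_mul, zero_sub] at this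
  have h2 := (mul_eq_zero.1 (neg_eq_zero.1 this.symm)).resolve_right (Real.exp_pos _).ne'
  linarith

/-- simultaneous determination of the convection coefficient and the initial
data of a 1D convection–diffusion process from the lateral boundary measurements at a
convergent sequence of times. -/
theorem statement1
    (T ε T1 : ℝ) (hT : 0 < T) (hε : ε ∈ Ioo (0:ℝ) (1/2)) (hT1 : T1 ∈ Ioo 0 T)
    (t : ℕ → ℝ) (ht_inj : Function.Injective t) (ht_mem : ∀ m, t m ∈ Ioo 0 T)
    (ht_lim : Filter.Tendsto t Filter.atTop (nhds T1))
    (b₁ b₂ g₁ g₂ : ℝ → ℝ)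
    (hb₁ : ContDiffOn ℝ 1 b₁ (Icc 0 1)) (hb₂ : ContDiffOn ℝ 1 b₂ (Icc 0 1))
    (hg₁ : ContDiffOn ℝ 1 g₁ (Icc 0 1)) (hg₂ : ContDiffOn ℝ 1 g₂ (Icc 0 1))
    (hg₁bd : g₁ 0 = 0 ∧ g₁ 1 = 0) (hg₂bd : g₂ 0 = 0 ∧ g₂ 1 = 0)
    (hg₁ne : ∃ x ∈ Icc (0:ℝ) 1, g₁ x ≠ 0) (hg₂ne : ∃ x ∈ Icc (0:ℝ) 1, g₂ x ≠ 0)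
    (hgsupp : ∀ x ∈ Icc (0:ℝ) 1, x ∉ Icc (0:ℝ) ε → g₁ x = 0 ∧ g₂ x = 0)
    (hbsupp : ∀ x ∈ Icc (0:ℝ) 1, x ∉ Icc (0:ℝ) (1/2 - ε) → b₁ x = b₂ x)
    (lam₁ lam₂ : ℕ → ℝ) (phi₁ phi₂ : ℕ → ℝ → ℝ)
    (hsys₁ : IsDirichletSystem (potentialOf b₁) lam₁ phi₁)
    (hsys₂ : IsDirichletSystem (potentialOf b₂) lam₂ phi₂)
    (hmeas : ∀ m : ℕ,
      boundaryMeasurement b₁ g₁ lam₁ phi₁ (t m)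
        = boundaryMeasurement b₂ g₂ lam₂ phi₂ (t m)) :
    EqOn g₁ g₂ (Icc 0 1) ∧ EqOn b₁ b₂ (Icc 0 1) := by
  obtain ⟨F₁⟩ := exists_Fund (pot_cont hb₁)
  obtain ⟨F₂⟩ := exists_Fund (pot_cont hb₂)
  obtain ⟨hε0, hε1⟩ := hε
  set a : ℝ := 1 / 2 - ε with ha
  have ha0 : 0 < a := by linarith
  have ha1 : a < 1 := by linarith
  have hh₁ := gauged_cont hb₁.continuousOn hg₁.continuousOn
  have hh₂ := gauged_cont hb₂.continuousOn hg₂.continuousOn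
  have hs₁ : ∀ x ∈ Icc (0:ℝ) 1, ε < x → gaugedDatum b₁ g₁ x = 0 := by
    intro x hx hlt
    simp only [gaugedDatum]
    rw [(hgsupp x hx (fun h => absurd h.2 (not_le.2 hlt))).1, mul_zero]
  have hs₂ : ∀ x ∈ Icc (0:ℝ) 1, ε < x → gaugedDatum b₂ g₂ x = 0 := by
    intro x hx hlt
    simp only [gaugedDatum]
    rw [(hgsupp x hx (fun h => absurd h.2 (not_le.2 hlt))).2, mul_zero]
  have hne₁ : ∃ x ∈ Icc (0:ℝ) 1, gaugedDatum b₁ g₁ x ≠ 0 := by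
    obtain ⟨x, hx, hn⟩ := hg₁ne
    exact ⟨x, hx, mul_ne_zero (Real.exp_pos _).ne' hn⟩
  have hbeq : ∀ x ∈ Icc (0:ℝ) 1, a < x → b₁ x = b₂ x := fun x hx hlt =>
    hbsupp x hx (fun h => absurd h.2 (not_le.2 hlt))
  have hVr : ∀ x ∈ Ioo a 1, potentialOf b₂ x = potentialOf b₁ x := by
    intro x hx
    have hxm : x ∈ Icc (0:ℝ) 1 := ⟨by linarith [hx.1], hx.2.le⟩
    have e1 : derivWithin b₂ (Icc 0 1) x = derivWithin b₁ (Icc 0 1) x := by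
      refine Filter.EventuallyEq.derivWithin_eq ?_ (hbeq x hxm hx.1).symm
      filter_upwards [self_mem_nhdsWithin, mem_nhdsWithin_of_mem_nhds (lt_mem_nhds hx.1)] with s hs hs'
      exact (hbeq s hs hs').symm
    simp only [potentialOf]
    rw [e1, hbeq x hxm hx.1]
  have h0 := step0 F₁ F₂ hsys₁ hsys₂ hh₁ hh₂ (by linarith : ε < 1) hs₁ hs₂ t T1 hT1.1
    (fun m => (ht_mem m).1) ht_inj ht_lim hmeas
  have h1 := step1 F₁ F₂ hh₁ hh₂ hne₁ hε0 ha0 ha hs₁ hs₂ hVr h0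
  have hVl := step3 F₁ F₂ ha0 ha1.le (fun x hx => step2 F₁ F₂ ha0 ha1.le h1 (Ioo_subset_Icc_self hx) 0)
  have hVe : ∀ x ∈ Icc (0:ℝ) 1, potentialOf b₁ x = potentialOf b₂ x := by
    intro x hx
    rcases le_total x a with hxa | hxa
    · have := Set.EqOn.of_subset_closure (s := Ioo 0 a) (t := Icc 0 a) hVl
        ((pot_cont hb₁).mono (Icc_subset_Icc le_rfl ha1.le))
        ((pot_cont hb₂).mono (Icc_subset_Icc le_rfl ha1.le)) Ioo_subset_Icc_self
        (by rw [closure_Ioo ha0.ne])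
      exact this ⟨hx.1, hxa⟩
    · have := Set.EqOn.of_subset_closure (s := Ioo a 1) (t := Icc a 1) hVr
        ((pot_cont hb₂).mono (Icc_subset_Icc ha0.le le_rfl))
        ((pot_cont hb₁).mono (Icc_subset_Icc ha0.le le_rfl)) Ioo_subset_Icc_self
        (by rw [closure_Ioo ha1.ne])
      exact (this ⟨hxa, hx.2⟩).symm
  have hb := b_unique hb₁ hb₂ hVe (hbeq 1 one_mem01 ha1)
  refine ⟨?_, hb⟩
  have hsol : ∀ l, IsSol (potentialOf b₁) l (F₂.S l) (F₂.S' l) := by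
    intro l
    refine ⟨(F₂.hS l).d1, ?_⟩
    intro x hx
    have := (F₂.hS l).d2 x hx
    rwa [← hVe x hx] at this
  have hSS : ∀ l, ∀ x ∈ Icc (0:ℝ) 1, F₂.S l x = F₁.S l x := by
    intro l x hx
    exact ((hsol l).unique (F₁.hS l) F₁.hV zero_mem01 (by rw [F₁.S0, F₂.S0]) (by rw [F₁.S'0, F₂.S'0]) hx).1
  have hDne : ∃ l, F₁.S l 1 ≠ 0 := by
    obtain ⟨n, hn⟩ := (F₁.S_lower one_pos le_rfl).exists
    obtain ⟨h1, h2⟩ := hn _ (OnSq_I (r := ((n:ℝ) + 1 / 2) * Real.pi / 1) (by positivity))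
    exact ⟨_, norm_pos_iff.1 (lt_of_lt_of_le (div_pos (Real.exp_pos _) (by linarith)) h2)⟩
  obtain ⟨l0, hl0⟩ := hDne
  have hPhi := entire_mul_zero (fun l => F₁.S l 1)
    (fun l => F₁.Phi (gaugedDatum b₁ g₁) l - F₂.Phi (gaugedDatum b₂ g₂) l) (F₁.Sd 1 one_mem01)
    ((F₁.Phid hh₁).sub (F₂.Phid hh₂)) (by
      intro l
      have := h0 l
      rw [hSS l 1 one_mem01] at this
      linear_combination this) hl0
  have hcomp := F₁.complete (h := fun x => (gaugedDatum b₁ g₁ x : ℂ) - (gaugedDatum b₂ g₂ x : ℂ))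
    ((Fund.contC hh₁).sub (Fund.contC hh₂)) (by
      intro l
      have := hPhi l
      simp only [Fund.Phi] at this
      have i1 : IntervalIntegrable (fun x => (gaugedDatum b₁ g₁ x : ℂ) * F₁.S l x) volume 0 1 :=
        ii_of_cont ((Fund.contC hh₁).mul (F₁.hS l).cont) zero_mem01 one_mem01
      have i2 : IntervalIntegrable (fun x => (gaugedDatum b₂ g₂ x : ℂ) * F₂.S l x) volume 0 1 :=
        ii_of_cont ((Fund.contC hh₂).mul (F₂.hS l).cont) zero_mem01 one_mem01
      rw [← intervalIntegral.integral_sub i1 i2] at this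
      rw [← this]
      refine intervalIntegral.integral_congr ?_
      intro x hx
      rw [uIcc_of_le zero_le_one] at hx
      simp only
      rw [hSS l x hx]; ring)
  intro x hx
  have hx1 := hcomp x hx
  have hx2 : gaugedDatum b₁ g₁ x = gaugedDatum b₂ g₂ x := by
    have := sub_eq_zero.1 hx1
    exact_mod_cast this
  have hI : ∫ s in (1:ℝ)..x, b₁ s = ∫ s in (1:ℝ)..x, b₂ s := by
    refine intervalIntegral.integral_congr ?_
    intro s hs
    exact hb ((convex_Icc (0:ℝ) 1).ordConnected.uIcc_subset one_mem01 hx hs)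
  simp only [gaugedDatum] at hx2
  rw [hI] at hx2
  exact mul_left_cancel₀ (Real.exp_pos _).ne' hx2
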